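/- arXiv:1410.8212 — 3 statements merged into one kernel-verified Lean document; each statement's English description precedes it below -/
import Mathlib

section
/- The algebra H_{q,κ} = (T(V)⋊G)/(v_i v_j − q_{ij} v_j v_i − κ(v_i,v_j) : 1 ≤ i,j ≤ n) is a quantum Drinfeld orbifold algebra (i.e., a PBW deformation of S_q(V)⋊G) if and only if the following four conditions hold. (1) For all g,h ∈ G and 1 ≤ i < j ≤ n: κ_g^C(v_j,v_i) = Σ_{k<l} det_{ijkl}(h) κ_{hgh⁻¹}^C(v_l,v_k) and ʰ(κ_g^L(v_j,v_i)) = Σ_{k<l} det_{ijkl}(h) κ_{hgh⁻¹}^L(v_l,v_k). (2) For all distinct i,j,k and all g ∈ G, in S_q(V): q_{ji}q_{ki} v_i κ_g^L(v_k,v_j) − κ_g^L(v_k,v_j) ᵍv_i − q_{kj} v_j κ_g^L(v_k,v_i) + q_{ji} κ_g^L(v_k,v_i) ᵍv_j + v_k κ_g^L(v_j,v_i) − q_{ki}q_{kj} κ_g^L(v_j,v_i) ᵍv_k = 0. (3) For all distinct i,j,k and all g ∈ G: Σ_{h∈G} ( q_{ij}q_{ik} κ_{gh⁻¹}^L(κ_h^L(v_j,v_k),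 ʰv_i) − κ_{gh⁻¹}^L(v_i, κ_h^L(v_j,v_k)) + q_{ik}q_{jk} κ_{gh⁻¹}^L(κ_h^L(v_k,v_i), ʰv_j) − q_{ij}q_{ik} κ_{gh⁻¹}^L(v_j, κ_h^L(v_k,v_i)) + κ_{gh⁻¹}^L(κ_h^L(v_i,v_j), ʰv_k) − q_{ik}q_{jk} κ_{gh⁻¹}^L(v_k, κ_h^L(v_i,v_j)) ) = 2( κ_g^C(v_j,v_k)(v_i − q_{ij}q_{ik} ᵍv_i) + κ_g^C(v_k,v_i)(q_{ij}q_{ik} v_j − q_{ik}q_{jk} ᵍv_j) + κ_g^C(v_i,v_j)(q_{ik}q_{jk} v_k − ᵍv_k) ). (4) For all distinct i,j,k and all g ∈ G: Σ_{h∈G} ( q_{ij}q_{ik} κ_{gh⁻¹}^C(κ_h^L(v_j,v_k), ʰv_i) − κ_{gh⁻¹}^C(v_i, κ_h^L(v_j,v_k)) + q_{ik}q_{jk} κ_{gh⁻¹}^C(κ_h^L(v_k,v_i), ʰv_j) − q_{ij}q_{ik} κ_{gh⁻¹}^C(v_j, κ_h^L(v_k,v_i)) + κ_{gh⁻¹}^C(κ_h^L(v_i,v_j),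 ʰv_k) − q_{ik}q_{jk} κ_{gh⁻¹}^C(v_k, κ_h^L(v_i,v_j)) ) = 0. -/
open scoped BigOperators

noncomputable section

namespace QDOA

/-- The generator `vᵢ` of `T(V) ⋊ G`, realized inside the free algebra on `Fin n ⊕ G`. -/
def Xv (k : Type*) [Field k] (n : ℕ) (G : Type*) (i : Fin n) : FreeAlgebra k (Fin n ⊕ G) :=
  FreeAlgebra.ι k (Sum.inl i)

/-- The generator `g ∈ G` of `T(V) ⋊ G`, realized inside the free algebra on `Fin n ⊕ G`. -/
def Xg (k : Type*) [Field k] (n : ℕ) (G : Type*) (g : G) : FreeAlgebra k (Fin n ⊕ G) :=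
  FreeAlgebra.ι k (Sum.inr g)

/-- The element `κ(vᵢ,vⱼ) = ∑_{g} (κ_g^C(vᵢ,vⱼ) + κ_g^L(vᵢ,vⱼ)) # g` of `T(V) ⋊ G`. -/
def kappaElt (k : Type*) [Field k] (n : ℕ) (G : Type*) [Fintype G]
    (kapC : Fin n → Fin n → G → k) (kapL : Fin n → Fin n → G → Fin n → k)
    (i j : Fin n) : FreeAlgebra k (Fin n ⊕ G) :=
  ∑ g : G, (algebraMap k _ (kapC i j g) + ∑ l, kapL i j g l • Xv k n G l) * Xg k n G g

/-- The relations defining `H_{q,κ}` as a quotient of `T(V) ⋊ G`: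
the relations `vᵢ vⱼ = q_{ij} vⱼ vᵢ + κ(vᵢ,vⱼ)` together with the semidirect
product relations `g ⋅ h = gh`, `1_G = 1` and `g vᵢ = (ᵍvᵢ) g`,
where `ᵍvⱼ = ∑ᵢ (ρ g)ᵢⱼ vᵢ`. -/
def relH (k : Type*) [Field k] (n : ℕ) (G : Type*) [Group G] [Fintype G]
    (q : Fin n → Fin n → k) (rho : G → Fin n → Fin n → k)
    (kapC : Fin n → Fin n → G → k) (kapL : Fin n → Fin n → G → Fin n → k) :
    FreeAlgebra k (Fin n ⊕ G) → FreeAlgebra k (Fin n ⊕ G) → Prop := fun a b =>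
  (∃ i j : Fin n, a = Xv k n G i * Xv k n G j ∧
      b = q i j • (Xv k n G j * Xv k n G i) + kappaElt k n G kapC kapL i j) ∨
  (∃ g h : G, a = Xg k n G g * Xg k n G h ∧ b = Xg k n G (g * h)) ∨
  (a = Xg k n G (1 : G) ∧ b = 1) ∨
  (∃ (g : G) (i : Fin n), a = Xg k n G g * Xv k n G i ∧
      b = (∑ l, rho g l i • Xv k n G l) * Xg k n G g)

/-- The filtered algebra `H_{q,κ} = (T(V) ⋊ G)/(vᵢvⱼ − q_{ij}vⱼvᵢ − κ(vᵢ,vⱼ))`. -/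
def Halg (k : Type*) [Field k] (n : ℕ) (G : Type*) [Group G] [Fintype G]
    (q : Fin n → Fin n → k) (rho : G → Fin n → Fin n → k)
    (kapC : Fin n → Fin n → G → k) (kapL : Fin n → Fin n → G → Fin n → k) :=
  RingQuot (relH k n G q rho kapC kapL)

instance (k : Type*) [Field k] (n : ℕ) (G : Type*) [Group G] [Fintype G]
    (q : Fin n → Fin n → k) (rho : G → Fin n → Fin n → k)
    (kapC : Fin n → Fin n → G → k) (kapL : Fin n → Fin n → G → Fin n → k) :
    Ring (Halg k n G q rho kapC kapL) := by unfold Halg; infer_instance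

instance (k : Type*) [Field k] (n : ℕ) (G : Type*) [Group G] [Fintype G]
    (q : Fin n → Fin n → k) (rho : G → Fin n → Fin n → k)
    (kapC : Fin n → Fin n → G → k) (kapL : Fin n → Fin n → G → Fin n → k) :
    Algebra k (Halg k n G q rho kapC kapL) := by unfold Halg; infer_instance

/-- The PBW monomial `v₁^{m₁} ⋯ v_n^{m_n} # g` in `H_{q,κ}`. -/
def monoH (k : Type*) [Field k] (n : ℕ) (G : Type*) [Group G] [Fintype G]
    (q : Fin n → Fin n → k) (rho : G → Fin n → Fin n → k)
    (kapC : Fin n → Fin n → G → k) (kapL : Fin n → Fin n → G → Fin n → k)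
    (p : (Fin n → ℕ) × G) : Halg k n G q rho kapC kapL :=
  ((List.finRange n).map
      (fun i => (RingQuot.mkAlgHom k (relH k n G q rho kapC kapL)
        (Xv k n G i)) ^ (p.1 i))).prod *
    RingQuot.mkAlgHom k (relH k n G q rho kapC kapL) (Xg k n G p.2)

/-- `H_{q,κ}` is a *quantum Drinfeld orbifold algebra*, i.e. a PBW deformation of
`S_q(V) ⋊ G`:  the monomials `v₁^{m₁} ⋯ v_n^{m_n} # g` form a `k`-basis. -/
def IsQDOA (k : Type*) [Field k] (n : ℕ) (G : Type*) [Group G] [Fintype G]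
    (q : Fin n → Fin n → k) (rho : G → Fin n → Fin n → k)
    (kapC : Fin n → Fin n → G → k) (kapL : Fin n → Fin n → G → Fin n → k) : Prop :=
  LinearIndependent k (monoH k n G q rho kapC kapL) ∧
    Submodule.span k (Set.range (monoH k n G q rho kapC kapL)) = ⊤

/-- The relations `vᵢvⱼ = q_{ij} vⱼvᵢ` of the quantum symmetric algebra `S_q(V)`. -/
def relS (k : Type*) [Field k] (n : ℕ) (q : Fin n → Fin n → k) :
    FreeAlgebra k (Fin n) → FreeAlgebra k (Fin n) → Prop := fun a b =>
  ∃ i j : Fin n, a = FreeAlgebra.ι k i * FreeAlgebra.ι k j ∧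
    b = q i j • (FreeAlgebra.ι k j * FreeAlgebra.ι k i)

/-- The quantum symmetric algebra `S_q(V)`. -/
def Sq (k : Type*) [Field k] (n : ℕ) (q : Fin n → Fin n → k) := RingQuot (relS k n q)

instance (k : Type*) [Field k] (n : ℕ) (q : Fin n → Fin n → k) : Ring (Sq k n q) := by
  unfold Sq; infer_instance

instance (k : Type*) [Field k] (n : ℕ) (q : Fin n → Fin n → k) : Algebra k (Sq k n q) := by
  unfold Sq; infer_instance

/-- The image of the basis vector `vᵢ` in `S_q(V)`. -/
def vS (k : Type*) [Field k] (n : ℕ) (q : Fin n → Fin n → k) (i : Fin n) : Sq k n q :=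
  RingQuot.mkAlgHom k (relS k n q) (FreeAlgebra.ι k i)

/-- The element `ᵍvᵢ = ∑ l, (ρ g)ₗᵢ vₗ` of `S_q(V)`. -/
def gvS (k : Type*) [Field k] (n : ℕ) (q : Fin n → Fin n → k) {G : Type*}
    (rho : G → Fin n → Fin n → k) (g : G) (i : Fin n) : Sq k n q :=
  ∑ l, rho g l i • vS k n q l

/-- The element `κ_g^L(vᵢ,vⱼ) = ∑ l, κL i j g l • vₗ` of `S_q(V)`. -/
def kapLS (k : Type*) [Field k] (n : ℕ) (q : Fin n → Fin n → k) {G : Type*}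
    (kapL : Fin n → Fin n → G → Fin n → k) (g : G) (i j : Fin n) : Sq k n q :=
  ∑ l, kapL i j g l • vS k n q l

/-- The vector `ᵍvᵢ ∈ V = Fin n → k`. -/
def gv (k : Type*) [Field k] (n : ℕ) {G : Type*} (rho : G → Fin n → Fin n → k)
    (g : G) (i : Fin n) : Fin n → k := fun m => rho g m i

/-- The standard basis vector `vᵢ` of `V = Fin n → k`. -/
def ev (k : Type*) [Field k] (n : ℕ) (i : Fin n) : Fin n → k := Pi.single i 1

/-- The vector `κ_g^L(vᵢ,vⱼ) ∈ V = Fin n → k`. -/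
def kapLv (k : Type*) [Field k] (n : ℕ) {G : Type*}
    (kapL : Fin n → Fin n → G → Fin n → k) (g : G) (i j : Fin n) : Fin n → k :=
  fun l => kapL i j g l

/-- The bilinear extension of `κ_g^L` to `V × V`. -/
def kapLbil (k : Type*) [Field k] (n : ℕ) {G : Type*}
    (kapL : Fin n → Fin n → G → Fin n → k) (g : G) (x y : Fin n → k) : Fin n → k :=
  fun t => ∑ a, ∑ b, x a * y b * kapL a b g t

/-- The bilinear extension of `κ_g^C` to `V × V`. -/
def kapCbil (k : Type*) [Field k] (n : ℕ) {G : Type*}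
    (kapC : Fin n → Fin n → G → k) (g : G) (x y : Fin n → k) : k :=
  ∑ a, ∑ b, x a * y b * kapC a b g

/-- **Condition (1)**: for all `g, h ∈ G` and `i < j`,
`κ_g^C(vⱼ,vᵢ) = ∑_{k<l} det_{ijkl}(h) κ_{hgh⁻¹}^C(vₗ,vₖ)` and
`ʰ(κ_g^L(vⱼ,vᵢ)) = ∑_{k<l} det_{ijkl}(h) κ_{hgh⁻¹}^L(vₗ,vₖ)`, where
`det_{ijkl}(h) = h_l^j h_k^i − q_{ji} h_l^i h_k^j` is the quantum minor determinant. -/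
def Cond1 (k : Type*) [Field k] (n : ℕ) (G : Type*) [Group G]
    (q : Fin n → Fin n → k) (rho : G → Fin n → Fin n → k)
    (kapC : Fin n → Fin n → G → k) (kapL : Fin n → Fin n → G → Fin n → k) : Prop :=
  ∀ (g h : G) (i j : Fin n), i < j →
    (kapC j i g =
      ∑ a, ∑ b, if a < b then
        (rho h b j * rho h a i - q j i * rho h b i * rho h a j) * kapC b a (h * g * h⁻¹)
      else 0) ∧
    (∀ m, (∑ l, rho h m l * kapL j i g l) =
      ∑ a, ∑ b, if a < b then
        (rho h b j * rho h a i - q j i * rho h b i * rho h a j) * kapL b a (h * g * h⁻¹) m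
      else 0)

/-- **Condition (2)**: for all distinct `i, j, k` and all `g ∈ G`, in `S_q(V)`:
`q_{ji}q_{ki} vᵢ κ_g^L(vₖ,vⱼ) − κ_g^L(vₖ,vⱼ) ᵍvᵢ − q_{kj} vⱼ κ_g^L(vₖ,vᵢ)
 + q_{ji} κ_g^L(vₖ,vᵢ) ᵍvⱼ + vₖ κ_g^L(vⱼ,vᵢ) − q_{ki}q_{kj} κ_g^L(vⱼ,vᵢ) ᵍvₖ = 0`. -/
def Cond2 (k : Type*) [Field k] (n : ℕ) (G : Type*) [Group G]
    (q : Fin n → Fin n → k) (rho : G → Fin n → Fin n → k)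
    (kapL : Fin n → Fin n → G → Fin n → k) : Prop :=
  ∀ (i j m : Fin n) (g : G), i ≠ j → i ≠ m → j ≠ m →
    (q j i * q m i) • (vS k n q i * kapLS k n q kapL g m j)
      - kapLS k n q kapL g m j * gvS k n q rho g i
      - q m j • (vS k n q j * kapLS k n q kapL g m i)
      + q j i • (kapLS k n q kapL g m i * gvS k n q rho g j)
      + vS k n q m * kapLS k n q kapL g j i
      - (q m i * q m j) • (kapLS k n q kapL g j i * gvS k n q rho g m) = 0

/-- **Condition (3)**: for all distinct `i, j, k` and all `g ∈ G`, in `V`: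
`∑_{h∈G} (q_{ij}q_{ik} κ_{gh⁻¹}^L(κ_h^L(vⱼ,vₖ),ʰvᵢ) − κ_{gh⁻¹}^L(vᵢ,κ_h^L(vⱼ,vₖ))
 + q_{ik}q_{jk} κ_{gh⁻¹}^L(κ_h^L(vₖ,vᵢ),ʰvⱼ) − q_{ij}q_{ik} κ_{gh⁻¹}^L(vⱼ,κ_h^L(vₖ,vᵢ))
 + κ_{gh⁻¹}^L(κ_h^L(vᵢ,vⱼ),ʰvₖ) − q_{ik}q_{jk} κ_{gh⁻¹}^L(vₖ,κ_h^L(vᵢ,vⱼ)))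
 = 2(κ_g^C(vⱼ,vₖ)(vᵢ − q_{ij}q_{ik} ᵍvᵢ) + κ_g^C(vₖ,vᵢ)(q_{ij}q_{ik} vⱼ − q_{ik}q_{jk} ᵍvⱼ)
    + κ_g^C(vᵢ,vⱼ)(q_{ik}q_{jk} vₖ − ᵍvₖ))`. -/
def Cond3 (k : Type*) [Field k] (n : ℕ) (G : Type*) [Group G] [Fintype G]
    (q : Fin n → Fin n → k) (rho : G → Fin n → Fin n → k)
    (kapC : Fin n → Fin n → G → k) (kapL : Fin n → Fin n → G → Fin n → k) : Prop :=
  ∀ (i j m : Fin n) (g : G), i ≠ j → i ≠ m → j ≠ m →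
    (∑ h : G,
      ((q i j * q i m) • kapLbil k n kapL (g * h⁻¹) (kapLv k n kapL h j m) (gv k n rho h i)
        - kapLbil k n kapL (g * h⁻¹) (ev k n i) (kapLv k n kapL h j m)
        + (q i m * q j m) • kapLbil k n kapL (g * h⁻¹) (kapLv k n kapL h m i) (gv k n rho h j)
        - (q i j * q i m) • kapLbil k n kapL (g * h⁻¹) (ev k n j) (kapLv k n kapL h m i)
        + kapLbil k n kapL (g * h⁻¹) (kapLv k n kapL h i j) (gv k n rho h m)
        - (q i m * q j m) • kapLbil k n kapL (g * h⁻¹) (ev k n m) (kapLv k n kapL h i j)))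
    = (2 : k) •
      (kapC j m g • (ev k n i - (q i j * q i m) • gv k n rho g i)
        + kapC m i g • ((q i j * q i m) • ev k n j - (q i m * q j m) • gv k n rho g j)
        + kapC i j g • ((q i m * q j m) • ev k n m - gv k n rho g m))

/-- **Condition (4)**: for all distinct `i, j, k` and all `g ∈ G`:
`∑_{h∈G} (q_{ij}q_{ik} κ_{gh⁻¹}^C(κ_h^L(vⱼ,vₖ),ʰvᵢ) − κ_{gh⁻¹}^C(vᵢ,κ_h^L(vⱼ,vₖ))
 + q_{ik}q_{jk} κ_{gh⁻¹}^C(κ_h^L(vₖ,vᵢ),ʰvⱼ) − q_{ij}q_{ik} κ_{gh⁻¹}^C(vⱼ,κ_h^L(vₖ,vᵢ))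
 + κ_{gh⁻¹}^C(κ_h^L(vᵢ,vⱼ),ʰvₖ) − q_{ik}q_{jk} κ_{gh⁻¹}^C(vₖ,κ_h^L(vᵢ,vⱼ))) = 0`. -/
def Cond4 (k : Type*) [Field k] (n : ℕ) (G : Type*) [Group G] [Fintype G]
    (q : Fin n → Fin n → k) (rho : G → Fin n → Fin n → k)
    (kapC : Fin n → Fin n → G → k) (kapL : Fin n → Fin n → G → Fin n → k) : Prop :=
  ∀ (i j m : Fin n) (g : G), i ≠ j → i ≠ m → j ≠ m →
    (∑ h : G,
      ((q i j * q i m) * kapCbil k n kapC (g * h⁻¹) (kapLv k n kapL h j m) (gv k n rho h i)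
        - kapCbil k n kapC (g * h⁻¹) (ev k n i) (kapLv k n kapL h j m)
        + (q i m * q j m) * kapCbil k n kapC (g * h⁻¹) (kapLv k n kapL h m i) (gv k n rho h j)
        - (q i j * q i m) * kapCbil k n kapC (g * h⁻¹) (ev k n j) (kapLv k n kapL h m i)
        + kapCbil k n kapC (g * h⁻¹) (kapLv k n kapL h i j) (gv k n rho h m)
        - (q i m * q j m) * kapCbil k n kapC (g * h⁻¹) (ev k n m) (kapLv k n kapL h i j))) = 0

section Ops

variable {k : Type*} [Field k] {n : ℕ} {G : Type*} [Group G] [Fintype G]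
  {M : Type*} [AddCommGroup M] [Module k M]

/-- normal form of filtration degree at most one, applied to a vector -/
def NF (X : Fin n → M →ₗ[k] M) (T : G → M →ₗ[k] M) (y : M) :
    ((G → k) × (G → Fin n → k)) →ₗ[k] M where
  toFun p := ∑ g, (p.1 g • T g y + ∑ l, p.2 g l • X l (T g y))
  map_add' p p' := by
    rw [← Finset.sum_add_distrib]
    refine Finset.sum_congr rfl fun g _ => ?_
    simp only [Prod.fst_add, Prod.snd_add, Pi.add_apply, add_smul, Finset.sum_add_distrib]
    abel
  map_smul' c p := by
    simp only [Prod.smul_fst, Prod.smul_snd, Pi.smul_apply, smul_eq_mul, mul_smul,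
      Finset.smul_sum, smul_add, RingHom.id_apply]

/-- the operator of `κ(vᵢ,vⱼ)` -/
def Kop (kapC : Fin n → Fin n → G → k) (kapL : Fin n → Fin n → G → Fin n → k)
    (X : Fin n → M →ₗ[k] M) (T : G → M →ₗ[k] M) (i j : Fin n) : M →ₗ[k] M :=
  ∑ h, (kapC i j h • T h + ∑ l, kapL i j h l • (X l ∘ₗ T h))

variable {kapC : Fin n → Fin n → G → k} {kapL : Fin n → Fin n → G → Fin n → k}
    {X : Fin n → M →ₗ[k] M} {T : G → M →ₗ[k] M} {q : Fin n → Fin n → k}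
    {rho : G → Fin n → Fin n → k}

lemma Kop_apply (i j : Fin n) (y : M) : Kop kapC kapL X T i j y =
    ∑ h, (kapC i j h • T h y + ∑ l, kapL i j h l • X l (T h y)) := by
  simp [Kop, LinearMap.sum_apply]

lemma Kop_eq_NF (i j : Fin n) (y : M) : Kop kapC kapL X T i j y =
    NF X T y (kapC i j, kapL i j) := by
  rw [Kop_apply]; rfl

lemma Kop_T (h : G) (y : M) (hT : ∀ g, T g (T h y) = T (g * h) y) (i j : Fin n) :
    Kop kapC kapL X T i j (T h y) =
    NF X T y (fun g => kapC i j (g * h⁻¹), fun g => kapL i j (g * h⁻¹)) := by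
  rw [Kop_apply]
  refine Fintype.sum_equiv (Equiv.mulRight h) _ _ fun g => ?_
  simp [hT]

/-- the quadratic tensor `e` lies in the span of the relations of `S_q(V)` -/
def QC (q : Fin n → Fin n → k) (e : Fin n → Fin n → k) : Prop :=
  ∀ a b, e a b + q b a * e b a = 0

/-- the relation `vₐ v_b = q v_b vₐ + κ` holds at `z` -/
def RelAt (q : Fin n → Fin n → k) (kapC : Fin n → Fin n → G → k)
    (kapL : Fin n → Fin n → G → Fin n → k)
    (X : Fin n → M →ₗ[k] M) (T : G → M →ₗ[k] M) (z : M) : Prop :=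
  ∀ a b, X a (X b z) = q a b • X b (X a z) + Kop kapC kapL X T a b z

lemma quad_half (z : M) (hR : RelAt q kapC kapL X T z) (e : Fin n → Fin n → k) (hQ : QC q e) :
    (2 : k) • (∑ a, ∑ b, e a b • X a (X b z)) = ∑ a, ∑ b, e a b • Kop kapC kapL X T a b z := by
  have h1 : (∑ a, ∑ b, e a b • X a (X b z)) = (∑ a, ∑ b, (e a b * q a b) • X b (X a z)) +
      ∑ a, ∑ b, e a b • Kop kapC kapL X T a b z := by
    simp only [← Finset.sum_add_distrib]
    refine Finset.sum_congr rfl fun a _ => Finset.sum_congr rfl fun b _ => ?_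
    rw [hR a b, smul_add, mul_smul]
  have h2 : (∑ a, ∑ b, (e a b * q a b) • X b (X a z)) = - ∑ a, ∑ b, e a b • X a (X b z) := by
    rw [Finset.sum_comm]
    simp only [← Finset.sum_neg_distrib]
    refine Finset.sum_congr rfl fun a _ => Finset.sum_congr rfl fun b _ => ?_
    rw [← neg_smul]
    congr 1
    linear_combination hQ a b
  rw [two_smul]
  nth_rewrite 2 [h1]
  rw [h2]
  abel

lemma sum_smul_NF (y : M) (e : Fin n → Fin n → k) (C : Fin n → Fin n → G → k)
    (L : Fin n → Fin n → G → Fin n → k) :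
    ∑ a, ∑ b, e a b • NF X T y (C a b, L a b) =
    NF X T y (fun g => ∑ a, ∑ b, e a b * C a b g, fun g l => ∑ a, ∑ b, e a b * L a b g l) := by
  simp only [← map_smul, ← map_sum]
  congr 1
  ext <;> simp [Prod.fst_sum, Prod.snd_sum, Finset.sum_apply]

/-- coefficients of the obstruction, quadratic part (the scaling of condition (2)) -/
def obE (q : Fin n → Fin n → k) (rho : G → Fin n → Fin n → k)
    (kapL : Fin n → Fin n → G → Fin n → k) (i j m : Fin n) (h : G) (a b : Fin n) : k :=
  (q j i * q m i) * (ev k n i a * kapL m j h b) - kapL m j h a * rho h b i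
    - q m j * (ev k n j a * kapL m i h b) + q j i * (kapL m i h a * rho h b j)
    + ev k n m a * kapL j i h b - (q m i * q m j) * (kapL j i h a * rho h b m)

/-- coefficients of the obstruction, linear part -/
def obL (q : Fin n → Fin n → k) (rho : G → Fin n → Fin n → k)
    (kapC : Fin n → Fin n → G → k) (i j m : Fin n) (h : G) (a : Fin n) : k :=
  (q j i * q m i) * (ev k n i a * kapC m j h) - kapC m j h * rho h a i
    - q m j * (ev k n j a * kapC m i h) + q j i * (kapC m i h * rho h a j)
    + ev k n m a * kapC j i h - (q m i * q m j) * (kapC j i h * rho h a m)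

/-- the obstruction -/
def Ob (q : Fin n → Fin n → k) (kapC : Fin n → Fin n → G → k)
    (kapL : Fin n → Fin n → G → Fin n → k)
    (X : Fin n → M →ₗ[k] M) (T : G → M →ₗ[k] M) (i j m : Fin n) (y : M) : M :=
  (q j i * q m i) • X i (Kop kapC kapL X T m j y) - Kop kapC kapL X T m j (X i y)
    - q m j • X j (Kop kapC kapL X T m i y) + q j i • Kop kapC kapL X T m i (X j y)
    + X m (Kop kapC kapL X T j i y) - (q m i * q m j) • Kop kapC kapL X T j i (X m y)

lemma X_Kop (i a b : Fin n) (y : M) : X i (Kop kapC kapL X T a b y) =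
    ∑ h, ((∑ c, ∑ d, (ev k n i c * kapL a b h d) • X c (X d (T h y))) +
      ∑ c, (ev k n i c * kapC a b h) • X c (T h y)) := by
  rw [Kop_apply, map_sum]
  refine Finset.sum_congr rfl fun h _ => ?_
  simp only [ev, map_add, map_smul, map_sum, Pi.single_apply, ite_mul, one_mul, zero_mul,
    ite_smul, zero_smul, Finset.sum_ite_eq', Finset.sum_ite_eq, Finset.mem_univ, if_true]
  rw [Finset.sum_comm]
  simp [add_comm]

lemma Kop_X (i a b : Fin n) (y : M)
    (hG : ∀ h i, T h (X i y) = ∑ l, rho h l i • X l (T h y)) :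
    Kop kapC kapL X T a b (X i y) =
    ∑ h, ((∑ c, ∑ d, (kapL a b h c * rho h d i) • X c (X d (T h y))) +
      ∑ c, (kapC a b h * rho h c i) • X c (T h y)) := by
  rw [Kop_apply]
  refine Finset.sum_congr rfl fun h _ => ?_
  simp only [hG, map_sum, map_smul, Finset.smul_sum, mul_smul]
  rw [add_comm]

lemma Ob_expand (i j m : Fin n) (y : M)
    (hG : ∀ h i, T h (X i y) = ∑ l, rho h l i • X l (T h y)) :
    Ob q kapC kapL X T i j m y =
    ∑ h, ((∑ c, ∑ d, obE q rho kapL i j m h c d • X c (X d (T h y))) +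
      ∑ c, obL q rho kapC i j m h c • X c (T h y)) := by
  simp only [Ob, X_Kop, Kop_X (rho := rho) _ _ _ y hG, obE, obL, add_smul, sub_smul, mul_smul,
    Finset.sum_add_distrib, Finset.sum_sub_distrib, Finset.smul_sum, smul_add]
  abel

lemma Ob_half (i j m : Fin n) (y : M)
    (hG : ∀ h i, T h (X i y) = ∑ l, rho h l i • X l (T h y))
    (hT : ∀ g h, T g (T h y) = T (g * h) y)
    (hR : ∀ h, RelAt q kapC kapL X T (T h y))
    (hQ : ∀ h, QC q (obE q rho kapL i j m h)) :
    (2 : k) • Ob q kapC kapL X T i j m y = NF X T y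
      (fun g => ∑ h, ∑ a, ∑ b, obE q rho kapL i j m h a b * kapC a b (g * h⁻¹),
       fun g l => (∑ h, ∑ a, ∑ b, obE q rho kapL i j m h a b * kapL a b (g * h⁻¹) l)
        + 2 * obL q rho kapC i j m g l) := by
  rw [Ob_expand (rho := rho) _ _ _ _ hG, Finset.smul_sum]
  have h1 : ∀ h, (2 : k) • ((∑ c, ∑ d, obE q rho kapL i j m h c d • X c (X d (T h y))) +
      ∑ c, obL q rho kapC i j m h c • X c (T h y)) =
      NF X T y (fun g => ∑ a, ∑ b, obE q rho kapL i j m h a b * kapC a b (g * h⁻¹),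
        fun g l => ∑ a, ∑ b, obE q rho kapL i j m h a b * kapL a b (g * h⁻¹) l) +
      ∑ c, (2 * obL q rho kapC i j m h c) • X c (T h y) := by
    intro h
    rw [smul_add, quad_half _ (hR h) _ (hQ h)]
    simp only [Kop_T h y (fun g => hT g h)]
    rw [sum_smul_NF y (obE q rho kapL i j m h) (fun a b g => kapC a b (g * h⁻¹))
      (fun a b g => kapL a b (g * h⁻¹)), Finset.smul_sum]
    simp only [smul_smul]
  simp only [h1]
  rw [Finset.sum_add_distrib, ← map_sum]
  have h2 : ∑ h, ∑ c, (2 * obL q rho kapC i j m h c) • X c (T h y) =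
    NF X T y (0, fun g l => 2 * obL q rho kapC i j m g l) := by
    simp [NF]
  rw [h2, ← map_add]
  congr 1
  ext <;> simp [Prod.fst_sum, Prod.snd_sum, Finset.sum_apply]

/-- quantum minor coefficients -/
def mnr (q : Fin n → Fin n → k) (rho : G → Fin n → Fin n → k) (i j : Fin n) (h : G)
    (a b : Fin n) : k := rho h a j * rho h b i - q j i * rho h a i * rho h b j

lemma T_K (i j : Fin n) (h : G) (y : M)
    (hG : ∀ g i, T h (X i (T g y)) = ∑ l, rho h l i • X l (T h (T g y)))
    (hT : ∀ g h, T g (T h y) = T (g * h) y) :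
    T h (Kop kapC kapL X T j i y) = NF X T y (fun g => kapC j i (h⁻¹ * g),
      fun g m => ∑ l, rho h m l * kapL j i (h⁻¹ * g) l) := by
  rw [Kop_apply, map_sum]
  refine Fintype.sum_equiv (Equiv.mulLeft h) _ _ fun g => ?_
  simp only [map_add, map_smul, map_sum, hG, hT, Equiv.coe_mulLeft, inv_mul_cancel_left,
    Finset.smul_sum, Finset.sum_smul]
  congr 1
  rw [Finset.sum_comm]
  refine Finset.sum_congr rfl fun a _ => Finset.sum_congr rfl fun b _ => ?_
  rw [smul_smul, mul_comm]

lemma T_K_half (i j : Fin n) (h : G) (y : M)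
    (hG : ∀ g i, T h (X i (T g y)) = ∑ l, rho h l i • X l (T h (T g y)))
    (hT : ∀ g h, T g (T h y) = T (g * h) y)
    (hR : RelAt q kapC kapL X T (T h y))
    (hQ : QC q (mnr q rho i j h)) :
    (2 : k) • (T h (Kop kapC kapL X T j i y)
      - ∑ a, ∑ b, mnr q rho i j h a b • X a (X b (T h y))) =
    NF X T y (fun g => 2 * kapC j i (h⁻¹ * g)
          - ∑ a, ∑ b, mnr q rho i j h a b * kapC a b (g * h⁻¹),
      fun g m => 2 * (∑ l, rho h m l * kapL j i (h⁻¹ * g) l)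
          - ∑ a, ∑ b, mnr q rho i j h a b * kapL a b (g * h⁻¹) m) := by
  rw [smul_sub, quad_half _ hR _ hQ, T_K i j h y hG hT]
  simp only [Kop_T h y (fun g => hT g h)]
  rw [sum_smul_NF y (mnr q rho i j h) (fun a b g => kapC a b (g * h⁻¹))
      (fun a b g => kapL a b (g * h⁻¹)), ← map_smul, ← map_sub]
  congr 1

end Ops

section Scal

variable {k : Type*} [Field k] {n : ℕ} {G : Type*} [Group G] [Fintype G]
variable {kapC : Fin n → Fin n → G → k} {kapL : Fin n → Fin n → G → Fin n → k}
    {q : Fin n → Fin n → k} {rho : G → Fin n → Fin n → k}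

lemma vS_mul (a b : Fin n) : vS k n q a * vS k n q b = q a b • (vS k n q b * vS k n q a) := by
  have h : RingQuot.mkAlgHom k (relS k n q) (FreeAlgebra.ι k a * FreeAlgebra.ι k b) =
      RingQuot.mkAlgHom k (relS k n q) (q a b • (FreeAlgebra.ι k b * FreeAlgebra.ι k a)) :=
    RingQuot.mkAlgHom_rel k ⟨a, b, rfl, rfl⟩
  rw [map_mul, map_smul, map_mul] at h
  exact h

lemma Sq_lift {A : Type*} [Ring A] [Algebra k A] (f : Fin n → A)
    (hf : ∀ a b, f a * f b = q a b • (f b * f a)) :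
    ∃ F : Sq k n q →ₐ[k] A, ∀ a, F (vS k n q a) = f a := by
  refine ⟨RingQuot.liftAlgHom k ⟨FreeAlgebra.lift k f, ?_⟩, ?_⟩
  · rintro x y ⟨a, b, rfl, rfl⟩
    simp [hf a b]
  · intro a
    have h := RingQuot.liftAlgHom_mkAlgHom_apply (S := k) (FreeAlgebra.lift k f) (s := relS k n q)
      (by rintro x y ⟨a, b, rfl, rfl⟩; simp [hf a b]) (FreeAlgebra.ι k a)
    rw [FreeAlgebra.lift_ι_apply] at h
    exact h

lemma gen_quad_of_QC [CharZero k] {A : Type*} [Ring A] [Algebra k A] (v : Fin n → A)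
    (hv : ∀ a b, v a * v b = q a b • (v b * v a))
    (e : Fin n → Fin n → k) (hQ : QC q e) :
    ∑ a, ∑ b, e a b • (v a * v b) = 0 := by
  have h := quad_half (k := k) (n := n) (G := Unit) (M := A) (q := q)
    (kapC := fun _ _ _ => 0) (kapL := fun _ _ _ _ => 0)
    (X := fun a => LinearMap.mulLeft k (v a)) (T := fun _ => 0) 1 (by
      intro a b
      simp [Kop, hv a b]) e hQ
  simp only [LinearMap.mulLeft_apply, mul_one] at h
  have h2 : (2 : k) ≠ 0 := two_ne_zero
  rw [← smul_eq_zero_iff_right h2, h]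
  simp [Kop]

lemma Sq_quad_of_QC [CharZero k] (e : Fin n → Fin n → k) (hQ : QC q e) :
    ∑ a, ∑ b, e a b • (vS k n q a * vS k n q b) = 0 :=
  gen_quad_of_QC (A := Sq k n q) (vS k n q) vS_mul e hQ

lemma QC_of_Sq_quad [CharZero k] (hq_diag : ∀ i, q i i = 1)
    (hq_inv : ∀ i j, q i j * q j i = 1) (e : Fin n → Fin n → k)
    (h : ∑ a, ∑ b, e a b • (vS k n q a * vS k n q b) = 0) : QC q e := by
  have hd : ∀ c, e c c = 0 := by
    intro c
    obtain ⟨F, hF⟩ := Sq_lift (q := q) (A := k) (fun a => if a = c then 1 else 0) (by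
      intro a b
      by_cases ha : a = c <;> by_cases hb : b = c <;> simp [ha, hb, hq_diag])
    have := congrArg F h
    simpa [map_sum, hF] using this
  intro c d
  by_cases hcd : c = d
  · subst hcd; simp [hd]
  let A : Matrix (Fin 3) (Fin 3) k := !![0, q c d, 0; 0, 0, 1; 0, 0, 0]
  let B : Matrix (Fin 3) (Fin 3) k := !![0, 1, 0; 0, 0, 1; 0, 0, 0]
  have hAB : A * B = q c d • (B * A) := by
    ext i j; fin_cases i <;> fin_cases j <;> simp [A, B, Matrix.mul_apply, Fin.sum_univ_three]
  have hBA : B * A = q d c • (A * B) := by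
    rw [hAB, smul_smul, hq_inv, one_smul]
  obtain ⟨F, hF⟩ := Sq_lift (q := q) (fun a => if a = c then A else if a = d then B else 0) (by
      intro a b
      by_cases ha : a = c
      · subst ha
        by_cases hb : b = a
        · subst hb; simp [hq_diag]
        · by_cases hb' : b = d
          · subst hb'; simpa [hb] using hAB
          · simp [hb, hb']
      · by_cases ha' : a = d
        · subst ha'
          by_cases hb : b = c
          · subst hb; simpa [ha] using hBA
          · by_cases hb' : b = a
            · subst hb'; simp [hq_diag]
            · simp [hb, hb']
        · simp [ha, ha'])
  have h1 := congrArg F h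
  simp only [map_sum, map_smul, map_mul, hF, map_zero] at h1
  have h2 := congrFun (congrFun h1 0) 2
  have key : ∀ a b, (e a b • ((if a = c then A else if a = d then B else 0) *
      (if b = c then A else if b = d then B else 0))) 0 2 =
      (if a = c then (if b = d then e c d * q c d else 0) else 0) +
      (if a = d then (if b = c then e d c else 0) else 0) := by
    intro a b
    have hdc : ¬ d = c := fun h => hcd h.symm
    by_cases ha : a = c
    · subst ha
      by_cases hb : b = a
      · subst hb; simp [hd, hcd]
      · by_cases hb' : b = d
        · subst hb'; simp [hb, hcd, A, B, Matrix.mul_apply, Fin.sum_univ_three]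
        · simp [hb, hb']
    · by_cases ha' : a = d
      · subst ha'
        by_cases hb : b = c
        · subst hb; simp [ha, hcd, A, B, Matrix.mul_apply, Fin.sum_univ_three]
        · by_cases hb' : b = a
          · subst hb'; simp [hd, ha]
          · simp [hb, hb', ha]
      · simp [ha, ha']
  simp only [Matrix.sum_apply, key, Finset.sum_add_distrib, Finset.sum_ite_eq', Finset.mem_univ,
    if_true, Finset.sum_ite_irrel, Finset.sum_const_zero, Matrix.zero_apply] at h2
  linear_combination q d c * h2 - e c d * hq_inv c d

lemma gen_mnr {A : Type*} [Ring A] [Algebra k A] (v : Fin n → A) (f : A →ₐ[k] A) (h : G)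
    (hf : ∀ i, f (v i) = ∑ l, rho h l i • v l) (i j : Fin n)
    (hv : v j * v i = q j i • (v i * v j)) :
    ∑ a, ∑ b, mnr q rho i j h a b • (v a * v b) = 0 := by
  have h1 := congrArg f hv
  simp only [map_mul, map_smul, hf, Finset.sum_mul_sum, smul_mul_smul_comm, Finset.smul_sum,
    smul_smul] at h1
  simp only [mnr, sub_smul, Finset.sum_sub_distrib]
  rw [sub_eq_zero, h1]
  simp only [mul_assoc]

lemma mnr_QC [CharZero k] (hq_diag : ∀ i, q i i = 1)
    (hq_inv : ∀ i j, q i j * q j i = 1)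
    (hrho_alg : ∀ g : G, ∃ f : Sq k n q →ₐ[k] Sq k n q,
      ∀ i, f (vS k n q i) = ∑ l, rho g l i • vS k n q l) (i j : Fin n) (h : G) :
    QC q (mnr q rho i j h) := by
  apply QC_of_Sq_quad hq_diag hq_inv
  obtain ⟨f, hf⟩ := hrho_alg h
  exact gen_mnr (A := Sq k n q) (vS k n q) f h hf i j (vS_mul j i)

lemma sum_half (hq_inv : ∀ i j, q i j * q j i = 1) [CharZero k] (hq_diag : ∀ i, q i i = 1)
    (e f : Fin n → Fin n → k) (hQ : QC q e)
    (hf : ∀ a b, f a b = -(q a b) * f b a) :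
    ∑ a, ∑ b, e a b * f a b = 2 * ∑ a, ∑ b, if a < b then e b a * f b a else 0 := by
  have hd : ∀ a, e a a = 0 := fun a => by
    have h := hQ a a
    rw [hq_diag] at h
    have : (2 : k) * e a a = 0 := by linear_combination h
    simpa using this
  have hs : ∀ a b, e a b * f a b = e b a * f b a := fun a b => by
    rw [hf a b]
    linear_combination (-(q a b * f b a)) * hQ a b + e b a * f b a * hq_inv a b
  have h1 : ∑ a, ∑ b, e a b * f a b = (∑ a, ∑ b, if a < b then e b a * f b a else 0) +
      ∑ a, ∑ b, if b < a then e a b * f a b else 0 := by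
    simp only [← Finset.sum_add_distrib]
    refine Finset.sum_congr rfl fun a _ => Finset.sum_congr rfl fun b _ => ?_
    rcases lt_trichotomy a b with h | h | h
    · simp [h, h.not_gt, hs a b]
    · subst h; simp [hd]
    · simp [h, h.not_gt]
  rw [h1, two_mul]
  congr 1
  rw [Finset.sum_comm]

lemma Cond1_iff [CharZero k] (hq_diag : ∀ i, q i i = 1)
    (hq_inv : ∀ i j, q i j * q j i = 1)
    (hm : ∀ i j (h : G), QC q (mnr q rho i j h))
    (hC : ∀ i j g, kapC i j g = -(q i j) * kapC j i g)
    (hL : ∀ i j g l, kapL i j g l = -(q i j) * kapL j i g l) :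
    Cond1 k n G q rho kapC kapL ↔ ∀ (g h : G) (i j : Fin n), i < j →
      (2 * kapC j i (h⁻¹ * g)
          - ∑ a, ∑ b, mnr q rho i j h a b * kapC a b (g * h⁻¹) = 0) ∧
      ∀ m, 2 * (∑ l, rho h m l * kapL j i (h⁻¹ * g) l)
          - ∑ a, ∑ b, mnr q rho i j h a b * kapL a b (g * h⁻¹) m = 0 := by
  have h2 : (2 : k) ≠ 0 := two_ne_zero
  have key1 : ∀ (g h : G) (i j : Fin n), (2 * kapC j i (h⁻¹ * g)
          - ∑ a, ∑ b, mnr q rho i j h a b * kapC a b (g * h⁻¹) = 0) ↔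
      kapC j i (h⁻¹ * g) = ∑ a, ∑ b, if a < b then
        (rho h b j * rho h a i - q j i * rho h b i * rho h a j) * kapC b a (g * h⁻¹)
      else 0 := by
    intro g h i j
    rw [sum_half hq_inv hq_diag (mnr q rho i j h) (fun a b => kapC a b (g * h⁻¹)) (hm i j h)
      (fun a b => hC a b _), ← mul_sub, mul_eq_zero, or_iff_right h2, sub_eq_zero]
    rfl
  have key2 : ∀ (g h : G) (i j m : Fin n), (2 * (∑ l, rho h m l * kapL j i (h⁻¹ * g) l)
          - ∑ a, ∑ b, mnr q rho i j h a b * kapL a b (g * h⁻¹) m = 0) ↔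
      (∑ l, rho h m l * kapL j i (h⁻¹ * g) l) = ∑ a, ∑ b, if a < b then
        (rho h b j * rho h a i - q j i * rho h b i * rho h a j) * kapL b a (g * h⁻¹) m
      else 0 := by
    intro g h i j m
    rw [sum_half hq_inv hq_diag (mnr q rho i j h) (fun a b => kapL a b (g * h⁻¹) m) (hm i j h)
      (fun a b => hL a b _ _), ← mul_sub, mul_eq_zero, or_iff_right h2, sub_eq_zero]
    rfl
  simp only [key1, key2]
  constructor
  · intro H g h i j hij
    have := H (h⁻¹ * g) h i j hij
    simpa [mul_assoc] using this
  · intro H g h i j hij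
    have := H (h * g) h i j hij
    simpa [mul_assoc] using this

lemma gen_cond2 {A : Type*} [Ring A] [Algebra k A] (v : Fin n → A) (i j m : Fin n) (g : G) :
    (q j i * q m i) • (v i * ∑ l, kapL m j g l • v l)
      - (∑ l, kapL m j g l • v l) * (∑ l, rho g l i • v l)
      - q m j • (v j * ∑ l, kapL m i g l • v l)
      + q j i • ((∑ l, kapL m i g l • v l) * (∑ l, rho g l j • v l))
      + v m * (∑ l, kapL j i g l • v l)
      - (q m i * q m j) • ((∑ l, kapL j i g l • v l) * (∑ l, rho g l m • v l)) =
      ∑ a, ∑ b, obE q rho kapL i j m g a b • (v a * v b) := by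
  have hev : ∀ i, v i = ∑ a, ev k n i a • v a := by
    intro i
    simp [ev, Pi.single_apply]
  rw [hev i, hev j, hev m]
  simp only [Finset.sum_mul_sum, smul_mul_smul_comm, obE, add_smul, sub_smul,
      Finset.sum_add_distrib, Finset.sum_sub_distrib, Finset.smul_sum, mul_smul]

lemma Cond2_iff [CharZero k] (hq_diag : ∀ i, q i i = 1)
    (hq_inv : ∀ i j, q i j * q j i = 1) :
    Cond2 k n G q rho kapL ↔ ∀ (i j m : Fin n) (g : G), i ≠ j → i ≠ m → j ≠ m →
      QC q (obE q rho kapL i j m g) := by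
  unfold Cond2
  refine forall_congr' fun i => forall_congr' fun j => forall_congr' fun m =>
    forall_congr' fun g => imp_congr_right fun _ => imp_congr_right fun _ =>
      imp_congr_right fun _ => ?_
  have : (q j i * q m i) • (vS k n q i * kapLS k n q kapL g m j)
      - kapLS k n q kapL g m j * gvS k n q rho g i
      - q m j • (vS k n q j * kapLS k n q kapL g m i)
      + q j i • (kapLS k n q kapL g m i * gvS k n q rho g j)
      + vS k n q m * kapLS k n q kapL g j i
      - (q m i * q m j) • (kapLS k n q kapL g j i * gvS k n q rho g m) =
      ∑ a, ∑ b, obE q rho kapL i j m g a b • (vS k n q a * vS k n q b) := by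
    exact gen_cond2 (A := Sq k n q) (vS k n q) i j m g
  rw [this]
  exact ⟨QC_of_Sq_quad hq_diag hq_inv _, Sq_quad_of_QC _⟩

lemma obE_scale (hq_inv : ∀ i j, q i j * q j i = 1)
    (hL : ∀ i j g l, kapL i j g l = -(q i j) * kapL j i g l) (i j m : Fin n) (h : G)
    (a b : Fin n) :
    (q i j * q i m * q j m) * obE q rho kapL i j m h a b =
    (q i j * q i m) * (kapL j m h a * rho h b i) - ev k n i a * kapL j m h b
    + (q i m * q j m) * (kapL m i h a * rho h b j) - (q i j * q i m) * (ev k n j a * kapL m i h b)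
    + kapL i j h a * rho h b m - (q i m * q j m) * (ev k n m a * kapL i j h b) := by
  unfold obE
  rw [hL m j h a, hL m j h b, hL j i h a, hL j i h b]
  have h1 := hq_inv i j
  have h2 := hq_inv i m
  have h3 := hq_inv j m
  grind

lemma obL_scale (hq_inv : ∀ i j, q i j * q j i = 1)
    (hC : ∀ i j g, kapC i j g = -(q i j) * kapC j i g) (i j m : Fin n) (h : G)
    (a : Fin n) :
    (q i j * q i m * q j m) * obL q rho kapC i j m h a =
    - ((kapC j m h * (ev k n i a - (q i j * q i m) * rho h a i)
        + kapC m i h * ((q i j * q i m) * ev k n j a - (q i m * q j m) * rho h a j)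
        + kapC i j h * ((q i m * q j m) * ev k n m a - rho h a m))) := by
  unfold obL
  rw [hC m j h, hC j i h]
  have h1 := hq_inv i j
  have h2 := hq_inv i m
  have h3 := hq_inv j m
  grind

lemma Cond3_iff 
    (hq_inv : ∀ i j, q i j * q j i = 1)
    (hC : ∀ i j g, kapC i j g = -(q i j) * kapC j i g)
    (hL : ∀ i j g l, kapL i j g l = -(q i j) * kapL j i g l) :
    Cond3 k n G q rho kapC kapL ↔ ∀ (i j m : Fin n) (g : G), i ≠ j → i ≠ m → j ≠ m →
      ∀ l, (∑ h, ∑ a, ∑ b, obE q rho kapL i j m h a b * kapL a b (g * h⁻¹) l)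
        + 2 * obL q rho kapC i j m g l = 0 := by
  unfold Cond3
  refine forall_congr' fun i => forall_congr' fun j => forall_congr' fun m =>
    forall_congr' fun g => imp_congr_right fun _ => imp_congr_right fun _ =>
      imp_congr_right fun _ => ?_
  rw [funext_iff]
  refine forall_congr' fun l => ?_
  have hne : q i j * q i m * q j m ≠ 0 :=
    mul_ne_zero (mul_ne_zero (left_ne_zero_of_mul_eq_one (hq_inv i j))
      (left_ne_zero_of_mul_eq_one (hq_inv i m))) (left_ne_zero_of_mul_eq_one (hq_inv j m))
  rw [← mul_eq_zero_iff_left hne (b := (∑ h, ∑ a, ∑ b, _) + _)]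
  have hL' := obL_scale (rho := rho) hq_inv hC i j m g l
  have hE : (q i j * q i m * q j m) *
      (∑ h, ∑ a, ∑ b, obE q rho kapL i j m h a b * kapL a b (g * h⁻¹) l) =
      ∑ h, ∑ a, ∑ b, ((q i j * q i m) * (kapL j m h a * rho h b i) - ev k n i a * kapL j m h b
    + (q i m * q j m) * (kapL m i h a * rho h b j) - (q i j * q i m) * (ev k n j a * kapL m i h b)
    + kapL i j h a * rho h b m - (q i m * q j m) * (ev k n m a * kapL i j h b))
      * kapL a b (g * h⁻¹) l := by
    simp only [Finset.mul_sum, ← obE_scale hq_inv hL]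
    simp only [mul_assoc]
  rw [mul_add, hE, mul_left_comm _ (2 : k), hL']
  simp only [Finset.sum_apply, Pi.add_apply, Pi.sub_apply, Pi.smul_apply, smul_eq_mul, kapLbil,
    kapLv, gv, add_mul, sub_mul, Finset.sum_add_distrib, Finset.sum_sub_distrib, Finset.mul_sum,
    mul_assoc]
  rw [← sub_eq_zero]
  refine Eq.congr ?_ rfl
  ring

lemma Cond4_iff 
    (hq_inv : ∀ i j, q i j * q j i = 1)
    (hL : ∀ i j g l, kapL i j g l = -(q i j) * kapL j i g l) :
    Cond4 k n G q rho kapC kapL ↔ ∀ (i j m : Fin n) (g : G), i ≠ j → i ≠ m → j ≠ m →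
      (∑ h, ∑ a, ∑ b, obE q rho kapL i j m h a b * kapC a b (g * h⁻¹)) = 0 := by
  unfold Cond4
  refine forall_congr' fun i => forall_congr' fun j => forall_congr' fun m =>
    forall_congr' fun g => imp_congr_right fun _ => imp_congr_right fun _ =>
      imp_congr_right fun _ => ?_
  have hne : q i j * q i m * q j m ≠ 0 :=
    mul_ne_zero (mul_ne_zero (left_ne_zero_of_mul_eq_one (hq_inv i j))
      (left_ne_zero_of_mul_eq_one (hq_inv i m))) (left_ne_zero_of_mul_eq_one (hq_inv j m))
  rw [← mul_eq_zero_iff_left hne (b := (∑ h, ∑ a, ∑ b, obE _ _ _ _ _ _ _ _ _ * _))]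
  have hE : (q i j * q i m * q j m) *
      (∑ h, ∑ a, ∑ b, obE q rho kapL i j m h a b * kapC a b (g * h⁻¹)) =
      ∑ h, ∑ a, ∑ b, ((q i j * q i m) * (kapL j m h a * rho h b i) - ev k n i a * kapL j m h b
    + (q i m * q j m) * (kapL m i h a * rho h b j) - (q i j * q i m) * (ev k n j a * kapL m i h b)
    + kapL i j h a * rho h b m - (q i m * q j m) * (ev k n m a * kapL i j h b))
      * kapC a b (g * h⁻¹) := by
    simp only [Finset.mul_sum, ← obE_scale hq_inv hL]
    simp only [mul_assoc]
  rw [hE]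
  simp only [kapCbil,
    kapLv, gv, add_mul, sub_mul, Finset.sum_add_distrib, Finset.sum_sub_distrib, Finset.mul_sum,
    mul_assoc]

end Scal

section Lead

variable {k : Type*} [Field k] {n : ℕ} {G : Type*} [Group G] [Fintype G]
  {M : Type*} [AddCommGroup M] [Module k M]

/-- sorted words -/
def Srt (w : List (Fin n)) : Prop := w.Pairwise (· ≤ ·)

/-- the span of sorted monomials of length at most `d` -/
def FS (k : Type*) [Field k] {n : ℕ} {G : Type*} {M : Type*} [AddCommGroup M] [Module k M]
    (b : List (Fin n) → G → M) (d : ℕ) : Submodule k M :=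
  Submodule.span k {x | ∃ w g, Srt w ∧ w.length ≤ d ∧ x = b w g}

lemma FS_mono (b : List (Fin n) → G → M) {d e : ℕ} (h : d ≤ e) : FS k b d ≤ FS k b e := by
  apply Submodule.span_mono
  rintro x ⟨w, g, hw, hl, rfl⟩
  exact ⟨w, g, hw, hl.trans h, rfl⟩

lemma mem_FS (b : List (Fin n) → G → M) {d : ℕ} {w : List (Fin n)} {g : G} (hw : Srt w)
    (hl : w.length ≤ d) : b w g ∈ FS k b d :=
  Submodule.subset_span ⟨w, g, hw, hl, rfl⟩

lemma Srt_ins {w : List (Fin n)} (hw : Srt w) (i : Fin n) : Srt (w.orderedInsert (· ≤ ·) i) :=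
  List.Pairwise.orderedInsert i w hw

lemma len_ins (w : List (Fin n)) (i : Fin n) :
    (w.orderedInsert (· ≤ ·) i).length = w.length + 1 :=
  List.orderedInsert_length _ _ _

lemma Srt_tail {w : List (Fin n)} {j : Fin n} (hw : Srt (j :: w)) : Srt w :=
  (List.pairwise_cons.1 hw).2

lemma Srt_cons_ins {w : List (Fin n)} {i j : Fin n} (hw : Srt (j :: w)) (hij : j < i) :
    Srt (j :: w.orderedInsert (· ≤ ·) i) := by
  have := Srt_ins hw i
  rwa [List.orderedInsert_cons, if_neg (not_le.2 hij)] at this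

lemma ins_cons_of_lt {w : List (Fin n)} {i j : Fin n} (hij : j < i) :
    (j :: w).orderedInsert (· ≤ ·) i = j :: w.orderedInsert (· ≤ ·) i := by
  rw [List.orderedInsert_cons, if_neg (not_le.2 hij)]

lemma Srt_cons_cons {w : List (Fin n)} {i j : Fin n} (hw : Srt (j :: w)) (hij : i ≤ j) :
    Srt (i :: j :: w) := by
  refine List.pairwise_cons.2 ⟨?_, hw⟩
  intro a ha
  rcases List.mem_cons.1 ha with rfl | ha
  · exact hij
  · exact hij.trans ((List.pairwise_cons.1 hw).1 a ha)

lemma ins_of_Srt {w : List (Fin n)} {i : Fin n} (hw : Srt (i :: w)) :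
    w.orderedInsert (· ≤ ·) i = i :: w := by
  cases w with
  | nil => rfl
  | cons j w =>
    rw [List.orderedInsert_cons, if_pos ((List.pairwise_cons.1 hw).1 j (by simp))]

lemma Srt_cases {w : List (Fin n)} (hw : Srt w) (i : Fin n) :
    Srt (i :: w) ∨ ∃ j w', w = j :: w' ∧ j < i := by
  cases w with
  | nil => left; exact List.pairwise_singleton _ _
  | cons j w =>
    rcases le_or_gt i j with h | h
    · exact Or.inl (Srt_cons_cons hw h)
    · exact Or.inr ⟨j, w, rfl, h⟩

/-- the recursion satisfied by a family of approximations to the action -/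
structure Fam (q : Fin n → Fin n → k) (rho : G → Fin n → Fin n → k)
    (kapC : Fin n → Fin n → G → k) (kapL : Fin n → Fin n → G → Fin n → k)
    (X : ℕ → Fin n → M →ₗ[k] M) (T : ℕ → G → M →ₗ[k] M) (b : List (Fin n) → G → M) : Prop where
  h1 : ∀ d i w g, Srt (i :: w) → X d i (b w g) = b (i :: w) g
  h2 : ∀ d i j w g, Srt (j :: w) → w.length = d → j < i → X (d+1) i (b (j :: w) g) =
    q i j • X d j (X d i (b w g)) + Kop kapC kapL (X d) (T d) i j (b w g)
  h3 : ∀ d i w g, Srt w → w.length ≤ d → X (d+1) i (b w g) = X d i (b w g)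
  t0 : ∀ d h g, T d h (b [] g) = b [] (h * g)
  t2 : ∀ d h j w g, Srt (j :: w) → w.length = d →
    T (d+1) h (b (j :: w) g) = ∑ l, rho h l j • X d l (T d h (b w g))
  t3 : ∀ d h w g, Srt w → w.length ≤ d → T (d+1) h (b w g) = T d h (b w g)

variable {kapC : Fin n → Fin n → G → k} {kapL : Fin n → Fin n → G → Fin n → k}
    {q : Fin n → Fin n → k} {rho : G → Fin n → Fin n → k}
    {X : ℕ → Fin n → M →ₗ[k] M} {T : ℕ → G → M →ₗ[k] M} {b : List (Fin n) → G → M}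

/-- leading term statement at level `d` -/
def LeadAt (X : ℕ → Fin n → M →ₗ[k] M) (T : ℕ → G → M →ₗ[k] M) (b : List (Fin n) → G → M)
    (d : ℕ) : Prop :=
  (∀ w, Srt w → w.length ≤ d → ∀ i g, ∃ c : k,
      X d i (b w g) - c • b (w.orderedInsert (· ≤ ·) i) g ∈ FS k b w.length) ∧
  (∀ w, Srt w → w.length ≤ d → ∀ h g, T d h (b w g) ∈ FS k b w.length)

lemma LeadAt.X_mem {d : ℕ} (H : LeadAt X T b d) {e : ℕ} (he : e ≤ d) (i : Fin n) {x : M}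
    (hx : x ∈ FS k b e) : X d i x ∈ FS k b (e + 1) := by
  have : FS k b e ≤ (FS k b (e + 1)).comap (X d i) := by
    apply Submodule.span_le.2
    rintro x ⟨w, g, hw, hl, rfl⟩
    obtain ⟨c, hc⟩ := H.1 w hw (hl.trans he) i g
    have h1 : c • b (w.orderedInsert (· ≤ ·) i) g ∈ FS k b (e + 1) :=
      Submodule.smul_mem _ _ (mem_FS b (Srt_ins hw i) (by rw [len_ins]; omega))
    have := Submodule.add_mem _ (FS_mono b (by omega : w.length ≤ e + 1) hc) h1
    simpa using this
  exact this hx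

lemma LeadAt.T_mem {d : ℕ} (H : LeadAt X T b d) {e : ℕ} (he : e ≤ d) (h : G) {x : M}
    (hx : x ∈ FS k b e) : T d h x ∈ FS k b e := by
  have : FS k b e ≤ (FS k b e).comap (T d h) := by
    apply Submodule.span_le.2
    rintro x ⟨w, g, hw, hl, rfl⟩
    exact FS_mono b hl (H.2 w hw (hl.trans he) h g)
  exact this hx

lemma lead (H : Fam q rho kapC kapL X T b) (d : ℕ) : LeadAt X T b d := by
  induction d with
  | zero =>
    constructor
    · intro w hw hl i g
      have : w = [] := List.length_eq_zero_iff.1 (by omega)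
      subst this
      refine ⟨1, ?_⟩
      rw [H.h1 0 i [] g (List.pairwise_singleton _ _)]
      simp
    · intro w hw hl h g
      have : w = [] := List.length_eq_zero_iff.1 (by omega)
      subst this
      rw [H.t0]
      exact mem_FS b hw le_rfl
  | succ d ih =>
    constructor
    · intro w hw hl i g
      rcases Nat.lt_or_ge d w.length with hd | hd
      · rcases Srt_cases hw i with h | ⟨j, w, rfl, hj⟩
        · refine ⟨1, ?_⟩
          rw [H.h1 _ i w g h, ins_of_Srt h]
          simp
        · have hwl : w.length = d := by simp at hl hd; omega
          obtain ⟨c, hc⟩ := ih.1 w (Srt_tail hw) hwl.le i g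
          refine ⟨q i j * c, ?_⟩
          rw [H.h2 d i j w g hw hwl hj, ins_cons_of_lt hj, mul_smul,
            ← H.h1 d j _ g (Srt_cons_ins hw hj), add_sub_right_comm, ← smul_sub, ← map_smul,
            ← map_sub, List.length_cons]
          refine Submodule.add_mem _ (Submodule.smul_mem _ _ (ih.X_mem hwl.le j hc)) ?_
          rw [Kop_apply]
          have hT : ∀ h, T d h (b w g) ∈ FS k b w.length := fun h =>
            ih.2 w (Srt_tail hw) hwl.le h g
          refine Submodule.sum_mem _ fun h _ => Submodule.add_mem _
            (Submodule.smul_mem _ _ (FS_mono b (by omega) (hT h)))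
            (Submodule.sum_mem _ fun l _ => Submodule.smul_mem _ _ (ih.X_mem hwl.le l (hT h)))
      · rw [H.h3 d i w g hw hd]
        exact ih.1 w hw hd i g
    · intro w hw hl h g
      rcases Nat.lt_or_ge d w.length with hd | hd
      · cases w with
        | nil => simp at hd
        | cons j w =>
          have hwl : w.length = d := by simp at hl hd; omega
          rw [H.t2 d h j w g hw hwl, List.length_cons]
          refine Submodule.sum_mem _ fun l _ => Submodule.smul_mem _ _ (ih.X_mem hwl.le l ?_)
          exact ih.2 w (Srt_tail hw) hwl.le h g
      · rw [H.t3 d h w g hw hd]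
        exact ih.2 w hw hd h g

lemma Fam.X_stable (H : Fam q rho kapC kapL X T b) {e d : ℕ} (he : e ≤ d) (i : Fin n)
    {w : List (Fin n)} (hw : Srt w) (hl : w.length ≤ e) (g : G) :
    X d i (b w g) = X e i (b w g) := by
  induction d, he using Nat.le_induction with
  | base => rfl
  | succ d hd ih => rw [H.h3 d i w g hw (hl.trans hd), ih]

lemma Fam.T_stable (H : Fam q rho kapC kapL X T b) {e d : ℕ} (he : e ≤ d) (h : G)
    {w : List (Fin n)} (hw : Srt w) (hl : w.length ≤ e) (g : G) :
    T d h (b w g) = T e h (b w g) := by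
  induction d, he using Nat.le_induction with
  | base => rfl
  | succ d hd ih => rw [H.t3 d h w g hw (hl.trans hd), ih]

end Lead

section Rep

variable (k : Type*) [Field k] (n : ℕ) (G : Type*) [Group G] [Fintype G]

/-- the space with basis the PBW monomials -/
abbrev PW := ({w : List (Fin n) // Srt w} × G) →₀ k

open Classical in
/-- the PBW monomials -/
def bP (w : List (Fin n)) (g : G) : PW k n G :=
  if h : Srt w then Finsupp.single (⟨w, h⟩, g) 1 else 0

variable {k n G}
variable (q : Fin n → Fin n → k) (rho : G → Fin n → Fin n → k)
    (kapC : Fin n → Fin n → G → k) (kapL : Fin n → Fin n → G → Fin n → k)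

open Classical in
/-- approximations to the action on `PW` -/
def opsF : ℕ → (Fin n → PW k n G →ₗ[k] PW k n G) × (G → PW k n G →ₗ[k] PW k n G)
  | 0 => (fun i => Finsupp.linearCombination k fun p => bP k n G (i :: p.1.1) p.2,
      fun h => Finsupp.linearCombination k fun p => bP k n G p.1.1 (h * p.2))
  | d + 1 =>
    (fun i => Finsupp.linearCombination k fun p =>
      match p.1.1 with
      | [] => bP k n G [i] p.2
      | j :: w => if w.length = d ∧ j < i then
          q i j • (opsF d).1 j ((opsF d).1 i (bP k n G w p.2)) +
            Kop kapC kapL (opsF d).1 (opsF d).2 i j (bP k n G w p.2)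
          else (opsF d).1 i (bP k n G (j :: w) p.2),
     fun h => Finsupp.linearCombination k fun p =>
      match p.1.1 with
      | [] => bP k n G [] (h * p.2)
      | j :: w => if w.length = d then
          ∑ l, rho h l j • (opsF d).1 l ((opsF d).2 h (bP k n G w p.2))
          else (opsF d).2 h (bP k n G (j :: w) p.2))

lemma lc_bP {M : Type*} [AddCommGroup M] [Module k M]
    (f : {w : List (Fin n) // Srt w} × G → M) {w : List (Fin n)} (hw : Srt w) (g : G) :
    Finsupp.linearCombination k f (bP k n G w g) = f (⟨w, hw⟩, g) := by
  simp [bP, hw]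

lemma opsF_fam : Fam q rho kapC kapL (fun d => (opsF q rho kapC kapL d).1)
    (fun d => (opsF q rho kapC kapL d).2) (bP k n G) where
  h1 d i w g hw := by
    induction d with
    | zero => exact lc_bP _ (Srt_tail hw) g
    | succ d ih =>
      refine (lc_bP _ (Srt_tail hw) g).trans ?_
      cases w with
      | nil => rfl
      | cons j w =>
        have : ¬ (j < i) := not_lt.2 ((List.pairwise_cons.1 hw).1 j (by simp))
        simp only [this, and_false, if_false]
        exact ih
  h2 d i j w g hw hl hj := by
    refine (lc_bP _ hw g).trans ?_
    simp only [hl, hj, and_self, if_true]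
  h3 d i w g hw hl := by
    refine (lc_bP _ hw g).trans ?_
    cases w with
    | nil =>
      cases d with
      | zero => refine Eq.symm ((lc_bP _ hw g).trans ?_); rfl
      | succ d => refine Eq.symm ((lc_bP _ hw g).trans ?_); rfl
    | cons j w =>
      have : ¬ (w.length = d) := by simp at hl; omega
      simp only [this, false_and, if_false]
  t0 d h g := by
    have hw : Srt ([] : List (Fin n)) := List.Pairwise.nil
    cases d with
    | zero => exact (lc_bP _ hw g)
    | succ d => exact (lc_bP _ hw g)
  t2 d h j w g hw hl := by
    refine (lc_bP _ hw g).trans ?_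
    simp only [hl, if_true]
  t3 d h w g hw hl := by
    refine (lc_bP _ hw g).trans ?_
    cases w with
    | nil =>
      cases d with
      | zero => refine Eq.symm ((lc_bP _ hw g).trans ?_); rfl
      | succ d => refine Eq.symm ((lc_bP _ hw g).trans ?_); rfl
    | cons j w =>
      have : ¬ (w.length = d) := by simp at hl; omega
      simp only [this, if_false]

lemma exists_ops : ∃ (X : Fin n → PW k n G →ₗ[k] PW k n G) (T : G → PW k n G →ₗ[k] PW k n G),
    Fam q rho kapC kapL (fun _ => X) (fun _ => T) (bP k n G) := by
  have H := opsF_fam q rho kapC kapL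
  set Xd := fun d => (opsF q rho kapC kapL d).1 with hXd
  set Td := fun d => (opsF q rho kapC kapL d).2 with hTd
  let X : Fin n → PW k n G →ₗ[k] PW k n G := fun i =>
    Finsupp.linearCombination k fun p => Xd p.1.1.length i (bP k n G p.1.1 p.2)
  let T : G → PW k n G →ₗ[k] PW k n G := fun h =>
    Finsupp.linearCombination k fun p => Td p.1.1.length h (bP k n G p.1.1 p.2)
  have hX : ∀ d i w g, Srt w → w.length ≤ d → X i (bP k n G w g) = Xd d i (bP k n G w g) := by
    intro d i w g hw hl
    rw [H.X_stable hl i hw le_rfl g]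
    exact lc_bP _ hw g
  have hT : ∀ d h w g, Srt w → w.length ≤ d → T h (bP k n G w g) = Td d h (bP k n G w g) := by
    intro d i w g hw hl
    rw [H.T_stable hl i hw le_rfl g]
    exact lc_bP _ hw g
  have hXF : ∀ d i x, x ∈ FS k (bP k n G) d → X i x = Xd d i x := by
    intro d i x hx
    have : FS k (bP k n G) d ≤ LinearMap.eqLocus (X i) (Xd d i) := by
      apply Submodule.span_le.2
      rintro x ⟨w, g, hw, hl, rfl⟩
      exact hX d i w g hw hl
    exact this hx
  have hX1 : ∀ i w g, Srt (i :: w) → X i (bP k n G w g) = bP k n G (i :: w) g := by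
    intro i w g hw
    rw [hX _ i w g (Srt_tail hw) le_rfl]
    exact H.h1 _ i w g hw
  refine ⟨X, T, ⟨fun _ => hX1, ?_, fun _ _ _ _ _ _ => rfl, ?_, ?_, fun _ _ _ _ _ _ => rfl⟩⟩
  · intro d i j w g hw hl hj
    have hw' := Srt_tail hw
    have L := lead H d
    rw [hX (d+1) i (j :: w) g hw (by simp [hl]), H.h2 d i j w g hw hl hj, hX d i w g hw' hl.le]
    congr 1
    · congr 1
      obtain ⟨c, hc⟩ := L.1 w hw' hl.le i g
      rw [hl] at hc
      have h1 := hXF d j _ hc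
      rw [map_sub, map_sub, map_smul, map_smul, hX1 j _ g (Srt_cons_ins hw hj),
        H.h1 d j _ g (Srt_cons_ins hw hj)] at h1
      exact (sub_left_injective h1).symm
    · rw [Kop_apply, Kop_apply]
      refine Finset.sum_congr rfl fun h _ => ?_
      rw [hT d h w g hw' hl.le]
      congr 1
      refine Finset.sum_congr rfl fun l _ => ?_
      rw [hXF d l _ (FS_mono _ hl.le (L.2 w hw' hl.le h g))]
  · intro d h g
    rw [hT 0 h [] g List.Pairwise.nil (by simp)]
    exact H.t0 0 h g
  · intro d h j w g hw hl
    have hw' := Srt_tail hw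
    have L := lead H d
    rw [hT (d+1) h (j :: w) g hw (by simp [hl]), H.t2 d h j w g hw hl]
    refine Finset.sum_congr rfl fun l _ => ?_
    rw [hT d h w g hw' hl.le, hXF d l _ (FS_mono _ hl.le (L.2 w hw' hl.le h g))]

end Rep

section Good

variable {k : Type*} [Field k] {n : ℕ} {G : Type*} [Group G] [Fintype G]
  {M : Type*} [AddCommGroup M] [Module k M]

/-- the submodule on which all relations hold -/
def GoodSub (q : Fin n → Fin n → k) (rho : G → Fin n → Fin n → k)
    (kapC : Fin n → Fin n → G → k) (kapL : Fin n → Fin n → G → Fin n → k)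
    (X : Fin n → M →ₗ[k] M) (T : G → M →ₗ[k] M) : Submodule k M where
  carrier := {x | RelAt q kapC kapL X T x ∧
    (∀ h i, T h (X i x) = ∑ l, rho h l i • X l (T h x)) ∧
    (∀ g h, T g (T h x) = T (g * h) x)}
  zero_mem' := by
    refine ⟨fun a b => ?_, fun h i => ?_, fun g h => ?_⟩ <;> simp
  add_mem' := by
    rintro x y ⟨h1, h2, h3⟩ ⟨k1, k2, k3⟩
    refine ⟨fun a b => ?_, fun h i => ?_, fun g h => ?_⟩
    · simp only [map_add, h1 a b, k1 a b, smul_add]; abel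
    · simp only [map_add, h2, k2, smul_add, Finset.sum_add_distrib]
    · simp only [map_add, h3, k3]
  smul_mem' := by
    rintro c x ⟨h1, h2, h3⟩
    refine ⟨fun a b => ?_, fun h i => ?_, fun g h => ?_⟩
    · simp only [map_smul, h1 a b, smul_add, smul_comm c]
    · simp only [map_smul, h2, Finset.smul_sum, smul_comm c]
    · simp only [map_smul, h3]

variable {kapC : Fin n → Fin n → G → k} {kapL : Fin n → Fin n → G → Fin n → k}
    {X : Fin n → M →ₗ[k] M} {T : G → M →ₗ[k] M} {q : Fin n → Fin n → k}
    {rho : G → Fin n → Fin n → k} {b : List (Fin n) → G → M}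

lemma Kop_antisymm (hC : ∀ i j g, kapC i j g = -(q i j) * kapC j i g)
    (hL : ∀ i j g l, kapL i j g l = -(q i j) * kapL j i g l) (i j : Fin n) (y : M) :
    Kop kapC kapL X T i j y = - (q i j • Kop kapC kapL X T j i y) := by
  rw [Kop_eq_NF, Kop_eq_NF, ← map_smul, ← map_neg]
  congr 1
  ext
  · simp only [Prod.smul_mk, Prod.neg_mk, Pi.neg_apply, Pi.smul_apply, smul_eq_mul]
    rw [hC]; ring
  · simp only [Prod.smul_mk, Prod.neg_mk, Pi.neg_apply, Pi.smul_apply, smul_eq_mul]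
    rw [hL]; ring

lemma RelAt_of_lt [CharZero k] (hq_diag : ∀ i, q i i = 1)
    (hq_inv : ∀ i j, q i j * q j i = 1)
    (hC : ∀ i j g, kapC i j g = -(q i j) * kapC j i g)
    (hL : ∀ i j g l, kapL i j g l = -(q i j) * kapL j i g l) {z : M}
    (h : ∀ i j, j < i → X i (X j z) = q i j • X j (X i z) + Kop kapC kapL X T i j z) :
    RelAt q kapC kapL X T z := by
  intro i j
  rcases lt_trichotomy j i with hij | hij | hij
  · exact h i j hij
  · subst hij
    have h0 := Kop_antisymm (X := X) (T := T) hC hL j j z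
    rw [hq_diag, one_smul] at h0 ⊢
    have h2 : (2 : k) • Kop kapC kapL X T j j z = 0 := by
      rw [two_smul]; nth_rewrite 1 [h0]; simp
    rw [(smul_eq_zero.1 h2).resolve_left two_ne_zero, add_zero]
  · rw [h j i hij, Kop_antisymm (X := X) (T := T) hC hL i j z, smul_add, smul_smul, hq_inv]
    simp

lemma GoodSub_top [CharZero k] (hq_diag : ∀ i, q i i = 1)
    (hq_inv : ∀ i j, q i j * q j i = 1)
    (hrho_mul : ∀ g h i j, rho (g * h) i j = ∑ l, rho g i l * rho h l j)
    (hC : ∀ i j g, kapC i j g = -(q i j) * kapC j i g)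
    (hL : ∀ i j g l, kapL i j g l = -(q i j) * kapL j i g l)
    (hm : ∀ i j (h : G), QC q (mnr q rho i j h))
    (c1 : ∀ (g h : G) (i j : Fin n), i < j →
      (2 * kapC j i (h⁻¹ * g)
          - ∑ a, ∑ b, mnr q rho i j h a b * kapC a b (g * h⁻¹) = 0) ∧
      ∀ m, 2 * (∑ l, rho h m l * kapL j i (h⁻¹ * g) l)
          - ∑ a, ∑ b, mnr q rho i j h a b * kapL a b (g * h⁻¹) m = 0)
    (c2 : ∀ (i j m : Fin n) (g : G), i ≠ j → i ≠ m → j ≠ m → QC q (obE q rho kapL i j m g))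
    (c3 : ∀ (i j m : Fin n) (g : G), i ≠ j → i ≠ m → j ≠ m →
      ∀ l, (∑ h, ∑ a, ∑ b, obE q rho kapL i j m h a b * kapL a b (g * h⁻¹) l)
        + 2 * obL q rho kapC i j m g l = 0)
    (c4 : ∀ (i j m : Fin n) (g : G), i ≠ j → i ≠ m → j ≠ m →
      (∑ h, ∑ a, ∑ b, obE q rho kapL i j m h a b * kapC a b (g * h⁻¹)) = 0)
    (H : Fam q rho kapC kapL (fun _ => X) (fun _ => T) b) (d : ℕ) :
    FS k b d ≤ GoodSub q rho kapC kapL X T := by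
  have hrel : ∀ i j w g, Srt (j :: w) → j < i → X i (X j (b w g)) =
      q i j • X j (X i (b w g)) + Kop kapC kapL X T i j (b w g) := by
    intro i j w g hw hj
    have h1 : X j (b w g) = b (j :: w) g := H.h1 0 j w g hw
    nth_rewrite 1 [h1]
    exact H.h2 _ i j w g hw rfl hj
  have hV : ∀ h i w g, Srt (i :: w) → T h (X i (b w g)) =
      ∑ l, rho h l i • X l (T h (b w g)) := by
    intro h i w g hw
    have h1 : X i (b w g) = b (i :: w) g := H.h1 0 i w g hw
    rw [h1]
    exact H.t2 _ h i w g hw rfl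
  have ht0 : ∀ h g, T h (b [] g) = b [] (h * g) := H.t0 0
  induction d with
  | zero =>
    apply Submodule.span_le.2
    rintro x ⟨w, g, hw, hl, rfl⟩
    have : w = [] := List.length_eq_zero_iff.1 (by omega)
    subst this
    refine ⟨RelAt_of_lt hq_diag hq_inv hC hL fun i j hij =>
      hrel i j [] g (List.pairwise_singleton _ _) hij, fun h i => ?_, fun g' h => ?_⟩
    · exact hV h i [] g (List.pairwise_singleton _ _)
    · rw [ht0, ht0, ht0, mul_assoc]
  | succ d ih =>
    apply Submodule.span_le.2
    rintro x ⟨w, g, hw, hl, rfl⟩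
    rcases Nat.lt_or_ge d w.length with hd | hd
    swap
    · exact ih (mem_FS b hw hd)
    cases w with
    | nil => simp at hd
    | cons l w =>
    have hwl : w.length = d := by simp at hl hd; omega
    have hw' := Srt_tail hw
    have L := lead H d
    have hyF : b w g ∈ FS k b d := mem_FS b hw' hwl.le
    have hX1 : X l (b w g) = b (l :: w) g := H.h1 0 l w g hw
    have lead1 : ∀ j, ∃ c : k, ∃ f ∈ FS k b d,
        X j (b w g) = c • b (w.orderedInsert (· ≤ ·) j) g + f := by
      intro j
      obtain ⟨c, hc⟩ := L.1 w hw' hwl.le j g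
      rw [hwl] at hc
      exact ⟨c, _, hc, by simp⟩
    have hTF : ∀ h, T h (b w g) ∈ FS k b d := fun h => L.T_mem le_rfl h hyF
    have yG := ih hyF
    have TG := fun h => ih (hTF h)
    have relX : ∀ i j, l < j → l < i → X i (X l (X j (b w g))) =
        q i l • X l (X i (X j (b w g))) + Kop kapC kapL X T i l (X j (b w g)) := by
      intro i j hj hi
      obtain ⟨c, f, hf, e⟩ := lead1 j
      rw [e]
      simp only [map_add, map_smul, hrel i l _ g (Srt_cons_ins hw hj) hi, (ih hf).1 i l,
        smul_add, smul_comm c]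
      abel
    have VX : ∀ h i, l < i → T h (X l (X i (b w g))) =
        ∑ a, rho h a l • X a (T h (X i (b w g))) := by
      intro h i hi
      obtain ⟨c, f, hf, e⟩ := lead1 i
      rw [e]
      simp only [map_add, map_smul, hV h l _ g (Srt_cons_ins hw hi), (ih hf).2.1 h l,
        smul_add, smul_comm c, Finset.smul_sum, Finset.sum_add_distrib]
    generalize hy : b w g = y at *
    refine ⟨RelAt_of_lt hq_diag hq_inv hC hL fun i j hij => ?_, fun h i => ?_, fun g' h => ?_⟩
    · rcases Srt_cases hw j with hs | ⟨l', w', hlw, hj⟩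
      · exact hrel i j _ g hs hij
      obtain ⟨rfl, rfl⟩ : l = l' ∧ w = w' := by simpa using hlw
      have hli := hj.trans hij
      have hOb2 := Ob_half l j i y yG.2.1 yG.2.2 (fun h => (TG h).1)
        (fun h => c2 l j i h hj.ne hli.ne hij.ne)
      have hOb : Ob q kapC kapL X T l j i y = 0 := by
        refine (smul_eq_zero.1 (hOb2.trans ?_)).resolve_left (two_ne_zero (α := k))
        rw [← map_zero (NF X T y)]
        congr 1
        ext
        · exact c4 l j i _ hj.ne hli.ne hij.ne
        · exact c3 l j i _ hj.ne hli.ne hij.ne _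
      rw [← hX1]
      have e1 := congrArg (X i) (yG.1 j l)
      have e2 := relX i j hj hli
      have e3 := congrArg (X l) (yG.1 i j)
      have e4 := relX j i hli hj
      have e5 := congrArg (X j) (yG.1 i l)
      simp only [map_add, map_smul] at e1 e3 e5
      rw [e1, e2, e3, e5, e4]
      rw [← sub_eq_zero, ← hOb, Ob]
      module
    · rcases Srt_cases hw i with hs | ⟨l', w', hlw, hi⟩
      · exact hV h i _ g hs
      obtain ⟨rfl, rfl⟩ : l = l' ∧ w = w' := by simpa using hlw
      have hTK := T_K_half l i h y (fun g i => (TG g).2.1 h i) yG.2.2 (TG h).1 (hm l i h)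
      have hTK0 := sub_eq_zero.1 ((smul_eq_zero.1 (hTK.trans (by
        rw [← map_zero (NF X T y)]
        congr 1
        ext
        · exact (c1 _ h l i hi).1
        · exact (c1 _ h l i hi).2 _))).resolve_left (two_ne_zero (α := k)))
      rw [← hX1, yG.1 i l, map_add, map_smul, VX h i hi, hTK0]
      simp only [yG.2.1, map_sum, map_smul, Finset.smul_sum, ← Finset.sum_add_distrib]
      refine Finset.sum_congr rfl fun a _ => Finset.sum_congr rfl fun c _ => ?_
      rw [mnr]
      module
    · rw [← hX1, yG.2.1, map_sum]
      simp only [map_smul, (TG _).2.1, yG.2.1, yG.2.2, hrho_mul, Finset.smul_sum, Finset.sum_smul]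
      rw [Finset.sum_comm]
      refine Finset.sum_congr rfl fun a _ => Finset.sum_congr rfl fun c _ => ?_
      rw [smul_smul, mul_comm]

end Good

section Fwd

variable {k : Type*} [Field k] {n : ℕ} {G : Type*} [Group G] [Fintype G]
  {M : Type*} [AddCommGroup M] [Module k M]
  {kapC : Fin n → Fin n → G → k} {kapL : Fin n → Fin n → G → Fin n → k}
  {X : Fin n → M →ₗ[k] M} {T : G → M →ₗ[k] M} {q : Fin n → Fin n → k}
  {rho : G → Fin n → Fin n → k}

open Classical in
lemma bP_apply {w : List (Fin n)} (hw : Srt w) (g : G) (p : {w : List (Fin n) // Srt w} × G) :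
    bP k n G w g p = if g = p.2 then (if w = p.1.1 then 1 else 0) else 0 := by
  obtain ⟨⟨w', hw'⟩, g'⟩ := p
  simp only [bP, hw, dif_pos, Finsupp.single_apply, Prod.mk.injEq, Subtype.mk.injEq]
  by_cases h1 : w = w' <;> by_cases h2 : g = g' <;> simp [h1, h2]

lemma Srt1 (l : Fin n) : Srt [l] := List.pairwise_singleton _ _

lemma Srt2 {a b : Fin n} (h : a ≤ b) : Srt [a, b] := Srt_cons_cons (Srt1 b) h

lemma Ob_zero (hgood : ∀ x, x ∈ GoodSub q rho kapC kapL X T) (i j m : Fin n) (y : M) :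
    Ob q kapC kapL X T i j m y = 0 := by
  have hK : ∀ a b z, Kop kapC kapL X T a b z = X a (X b z) - q a b • X b (X a z) := by
    intro a b z
    rw [(hgood z).1 a b]; abel
  rw [Ob]
  simp only [hK, map_sub, map_smul]
  module

lemma T_K_zero (hgood : ∀ x, x ∈ GoodSub q rho kapC kapL X T) (i j : Fin n) (h : G) (y : M) :
    T h (Kop kapC kapL X T j i y)
      - ∑ a, ∑ b, mnr q rho i j h a b • X a (X b (T h y)) = 0 := by
  have hK : ∀ a b z, Kop kapC kapL X T a b z = X a (X b z) - q a b • X b (X a z) := by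
    intro a b z
    rw [(hgood z).1 a b]; abel
  have hV : ∀ h i x, T h (X i x) = ∑ l, rho h l i • X l (T h x) := fun h i x => (hgood x).2.1 h i
  simp only [hK, map_sub, map_smul, hV, map_sum, Finset.smul_sum, ← Finset.sum_sub_distrib]
  refine Finset.sum_eq_zero fun a _ => Finset.sum_eq_zero fun b _ => ?_
  rw [mnr]
  module

lemma fwd_conds [CharZero k] (hq_diag : ∀ i, q i i = 1)
    (hq_inv : ∀ i j, q i j * q j i = 1)
    (hm : ∀ i j (h : G), QC q (mnr q rho i j h))
    (hgood : ∀ x, x ∈ GoodSub q rho kapC kapL X T) (y : M) (Φ : M →ₗ[k] PW k n G)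
    (p0 : ∀ g, Φ (T g y) = bP k n G [] g)
    (p1 : ∀ g l, Φ (X l (T g y)) = bP k n G [l] g)
    (p2 : ∀ g a b, a ≤ b → Φ (X a (X b (T g y))) = bP k n G [a, b] g) :
    (∀ (g h : G) (i j : Fin n), i < j →
      (2 * kapC j i (h⁻¹ * g)
          - ∑ a, ∑ b, mnr q rho i j h a b * kapC a b (g * h⁻¹) = 0) ∧
      ∀ m, 2 * (∑ l, rho h m l * kapL j i (h⁻¹ * g) l)
          - ∑ a, ∑ b, mnr q rho i j h a b * kapL a b (g * h⁻¹) m = 0) ∧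
    (∀ (i j m : Fin n) (g : G), i ≠ j → i ≠ m → j ≠ m → QC q (obE q rho kapL i j m g)) ∧
    (∀ (i j m : Fin n) (g : G), i ≠ j → i ≠ m → j ≠ m →
      ∀ l, (∑ h, ∑ a, ∑ b, obE q rho kapL i j m h a b * kapL a b (g * h⁻¹) l)
        + 2 * obL q rho kapC i j m g l = 0) ∧
    (∀ (i j m : Fin n) (g : G), i ≠ j → i ≠ m → j ≠ m →
      (∑ h, ∑ a, ∑ b, obE q rho kapL i j m h a b * kapC a b (g * h⁻¹)) = 0) := by
  classical
  have hnil : Srt ([] : List (Fin n)) := List.Pairwise.nil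
  have hNF : ∀ p, NF X T y p = 0 → (∀ g, p.1 g = 0) ∧ ∀ g l, p.2 g l = 0 := by
    intro p hp
    have h1 : Φ (NF X T y p) = 0 := by rw [hp, map_zero]
    simp only [NF, LinearMap.coe_mk, AddHom.coe_mk, map_sum, map_add, map_smul, p0, p1] at h1
    constructor
    · intro g
      have := DFunLike.congr_fun h1 (⟨[], hnil⟩, g)
      simpa [Finsupp.finset_sum_apply, bP_apply hnil, bP_apply (Srt1 _)] using this
    · intro g l
      have := DFunLike.congr_fun h1 (⟨[l], Srt1 l⟩, g)
      simpa [Finsupp.finset_sum_apply, bP_apply hnil, bP_apply (Srt1 _), Finset.sum_add_distrib]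
        using this
  have hQ : ∀ (i j m : Fin n) (g : G), QC q (obE q rho kapL i j m g) := by
    intro i j m g
    have hOb := Ob_zero hgood i j m y
    rw [Ob_expand i j m y (hgood y).2.1] at hOb
    have main : ∀ a b, a ≤ b → obE q rho kapL i j m g a b +
        (if a < b then q b a else 0) * obE q rho kapL i j m g b a = 0 := by
      intro a b hab
      set s : k := if a < b then q b a else 0 with hs
      let φ : M →ₗ[k] k := (Finsupp.lapply (⟨[a, b], Srt2 hab⟩, g)) ∘ₗ Φ
      have f0 : ∀ h, φ (T h y) = 0 := by
        intro h
        simp [φ, p0, bP_apply hnil]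
      have f1 : ∀ h l, φ (X l (T h y)) = 0 := by
        intro h l
        simp [φ, p1, bP_apply (Srt1 _)]
      have fN : ∀ p, φ (NF X T y p) = 0 := by
        intro p
        simp only [NF, LinearMap.coe_mk, AddHom.coe_mk, map_sum, map_add, map_smul, f0, f1]
        simp
      have fle : ∀ h c d, c ≤ d → φ (X c (X d (T h y))) = (if h = g then 1 else 0) *
          ((if c = a then 1 else 0) * (if d = b then 1 else 0)) := by
        intro h c d hcd
        simp only [φ, LinearMap.comp_apply, p2 h c d hcd, Finsupp.lapply_apply,
          bP_apply (Srt2 hcd)]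
        by_cases h1 : h = g <;> by_cases h2 : c = a <;> by_cases h3 : d = b <;> simp [h1, h2, h3]
      have f2 : ∀ h c d, φ (X c (X d (T h y))) = (if h = g then 1 else 0) *
          ((if c = a then 1 else 0) * (if d = b then 1 else 0) +
            s * ((if c = b then 1 else 0) * (if d = a then 1 else 0))) := by
        intro h c d
        rcases le_or_gt c d with hcd | hcd
        · rw [fle h c d hcd]
          have : s * ((if c = b then 1 else 0) * (if d = a then 1 else 0)) = (0 : k) := by
            by_cases h1 : c = b
            · by_cases h2 : d = a
              · subst h1 h2
                simp [hs, not_lt.2 hcd]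
              · simp [h2]
            · simp [h1]
          rw [this, add_zero]
        · rw [(hgood _).1 c d, map_add, map_smul, Kop_T h y (fun g => (hgood y).2.2 g h), fN,
            fle h d c hcd.le]
          have h0 : ((if c = a then 1 else 0) * (if d = b then 1 else 0) : k) = 0 := by
            by_cases h1 : c = a
            · by_cases h2 : d = b
              · subst h1 h2
                exact absurd hab (not_le.2 hcd)
              · simp [h2]
            · simp [h1]
          rw [h0, zero_add, add_zero, smul_eq_mul]
          by_cases h1 : c = b
          · by_cases h2 : d = a
            · subst h1 h2
              simp [hs, hcd]
            · simp [h2]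
          · simp [h1]
      have h1 := (congrArg (⇑φ) hOb).trans (map_zero φ)
      simp only [map_sum, map_add, map_smul, f1, f2, smul_eq_mul] at h1
      simp only [mul_add, Finset.sum_add_distrib, mul_ite, ite_mul, mul_one, mul_zero, one_mul,
        zero_mul, Finset.sum_ite_eq', Finset.sum_ite_eq, Finset.mem_univ, if_true,
        Finset.sum_const_zero, add_zero] at h1
      linear_combination h1
    intro a b
    rcases lt_trichotomy a b with h | h | h
    · simpa [h] using main a b h.le
    · subst h
      have := main a a le_rfl
      simp only [lt_irrefl, if_false, zero_mul, add_zero] at this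
      rw [this]; simp
    · have := main b a h.le
      simp only [h, if_true] at this
      linear_combination q b a * this - obE q rho kapL i j m g a b * hq_inv b a
  have hOb : ∀ i j m, _ := fun i j m => hNF _
    ((Ob_half i j m y (hgood y).2.1 (hgood y).2.2 (fun h => (hgood _).1) (hQ i j m)).symm.trans
      (by rw [Ob_zero hgood, smul_zero]))
  refine ⟨?_, fun i j m g _ _ _ => hQ i j m g, fun i j m g _ _ _ l => (hOb i j m).2 g l,
    fun i j m g _ _ _ => (hOb i j m).1 g⟩
  intro g h i j _
  have := hNF _ ((T_K_half i j h y (fun g i => (hgood _).2.1 h i) (hgood y).2.2 (hgood _).1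
    (hm i j h)).symm.trans (by rw [T_K_zero hgood, smul_zero]))
  exact ⟨this.1 g, this.2 g⟩

end Fwd

section Words

/-- the sorted word with given multiplicities -/
def wd {n : ℕ} (m : Fin n → ℕ) : List (Fin n) :=
  (List.finRange n).flatMap fun i => List.replicate (m i) i

lemma wd_Srt {n : ℕ} (m : Fin n → ℕ) : Srt (wd m) := by
  rw [Srt, wd, List.pairwise_flatMap]
  constructor
  · intro a _
    rw [List.pairwise_replicate]
    right; exact le_rfl
  · refine (List.pairwise_lt_finRange n).imp ?_
    intro a b hab x hx y hy
    rw [List.eq_of_mem_replicate hx, List.eq_of_mem_replicate hy]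
    exact hab.le

lemma wd_count {n : ℕ} (m : Fin n → ℕ) (a : Fin n) : (wd m).count a = m a := by
  rw [wd, List.count_flatMap, ← Fin.sum_univ_def]
  simp [List.count_replicate]

lemma wd_of_count {n : ℕ} {w : List (Fin n)} (hw : Srt w) : wd (fun i => w.count i) = w := by
  have hp : (wd (fun i => w.count i)).Perm w := by
    rw [List.perm_iff_count]
    intro a
    rw [wd_count]
  exact hp.eq_of_pairwise (fun a b _ _ h1 h2 => le_antisymm h1 h2) (wd_Srt _) hw

lemma prod_wd {n : ℕ} {A : Type*} [Monoid A] (v : Fin n → A) (m : Fin n → ℕ) :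
    ((wd m).map v).prod = ((List.finRange n).map fun i => v i ^ m i).prod := by
  rw [wd]
  induction List.finRange n with
  | nil => simp
  | cons a l ih =>
    rw [List.flatMap_cons, List.map_append, List.prod_append, ih]
    simp

end Words

section Alg

variable {k : Type*} [Field k] {n : ℕ} {G : Type*} [Group G] [Fintype G]
  {kapC : Fin n → Fin n → G → k} {kapL : Fin n → Fin n → G → Fin n → k}
  {q : Fin n → Fin n → k} {rho : G → Fin n → Fin n → k}
  {A : Type*} [Ring A] [Algebra k A] {v : Fin n → A} {t : G → A}

/-- the defining relations in an algebra -/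
structure AlgRel (q : Fin n → Fin n → k) (rho : G → Fin n → Fin n → k)
    (kapC : Fin n → Fin n → G → k) (kapL : Fin n → Fin n → G → Fin n → k)
    (v : Fin n → A) (t : G → A) : Prop where
  r1 : ∀ i j, v i * v j = q i j • (v j * v i) +
    ∑ g : G, (algebraMap k A (kapC i j g) + ∑ l, kapL i j g l • v l) * t g
  r2 : ∀ g h, t g * t h = t (g * h)
  r3 : t 1 = 1
  r4 : ∀ g i, t g * v i = (∑ l, rho g l i • v l) * t g

/-- left multiplications -/
def Xm (k : Type*) [Field k] {n : ℕ} {A : Type*} [Ring A] [Algebra k A] (v : Fin n → A)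
    (i : Fin n) : A →ₗ[k] A := LinearMap.mulLeft k (v i)

/-- left multiplications -/
def Tm (k : Type*) [Field k] {G : Type*} {A : Type*} [Ring A] [Algebra k A] (t : G → A)
    (i : G) : A →ₗ[k] A := LinearMap.mulLeft k (t i)

lemma Kop_alg (i j : Fin n) (z : A) : Kop kapC kapL (Xm k v) (Tm k t) i j z =
    (∑ g : G, (algebraMap k A (kapC i j g) + ∑ l, kapL i j g l • v l) * t g) * z := by
  rw [Kop_apply, Finset.sum_mul]
  refine Finset.sum_congr rfl fun g _ => ?_
  simp only [Xm, Tm, LinearMap.mulLeft_apply, add_mul, Finset.sum_mul, smul_mul_assoc, mul_assoc,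
    Algebra.smul_def]

lemma alg_good (R : AlgRel q rho kapC kapL v t) (x : A) :
    x ∈ GoodSub q rho kapC kapL (Xm k v) (Tm k t) := by
  refine ⟨fun a b => ?_, fun h i => ?_, fun g h => ?_⟩
  · rw [Kop_alg]
    simp only [Xm, LinearMap.mulLeft_apply]
    rw [← mul_assoc, R.r1, add_mul, smul_mul_assoc, mul_assoc]
  · simp only [Xm, Tm, LinearMap.mulLeft_apply]
    rw [← mul_assoc, R.r4, mul_assoc, Finset.sum_mul]
    simp
  · simp only [Tm, LinearMap.mulLeft_apply]
    rw [← mul_assoc, R.r2]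

lemma alg_fam (R : AlgRel q rho kapC kapL v t) :
    Fam q rho kapC kapL (fun _ => Xm k v) (fun _ => Tm k t)
      (fun w g => (w.map v).prod * t g) where
  h1 d i w g _ := by simp [Xm, mul_assoc]
  h2 d i j w g _ _ _ := by
    have := (alg_good R ((w.map v).prod * t g)).1 i j
    rw [← this]
    simp [Xm, mul_assoc]
  h3 d i w g _ _ := rfl
  t0 d h g := by simp [Tm, R.r2]
  t2 d h j w g _ _ := by
    have := (alg_good R ((w.map v).prod * t g)).2.1 h j
    rw [← this]
    simp [Xm, Tm, mul_assoc]
  t3 d h w g _ _ := rfl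

/-- the span of ordered monomials is a left ideal for the generators -/
lemma alg_span (R : AlgRel q rho kapC kapL v t)
    (hgen : ∀ U : Submodule k A, (1 : A) ∈ U → (∀ i x, x ∈ U → v i * x ∈ U) →
      (∀ g x, x ∈ U → t g * x ∈ U) → U = ⊤) :
    Submodule.span k {x | ∃ w g, Srt w ∧ x = (w.map v).prod * t g} = ⊤ := by
  have F := alg_fam R
  apply hgen
  · refine Submodule.subset_span ⟨[], 1, List.Pairwise.nil, ?_⟩
    simp [R.r3]
  · intro i x hx
    have : Submodule.span k {x | ∃ w g, Srt w ∧ x = (w.map v).prod * t g} ≤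
      (Submodule.span k {x | ∃ w g, Srt w ∧ x = (w.map v).prod * t g}).comap (Xm k v i) := by
      apply Submodule.span_le.2
      rintro x ⟨w, g, hw, rfl⟩
      have := (lead F w.length).X_mem le_rfl i (mem_FS (k := k) _ hw le_rfl (g := g))
      refine Submodule.span_mono ?_ this
      rintro x ⟨w, g, hw, -, rfl⟩
      exact ⟨w, g, hw, rfl⟩
    exact this hx
  · intro i x hx
    have : Submodule.span k {x | ∃ w g, Srt w ∧ x = (w.map v).prod * t g} ≤
      (Submodule.span k {x | ∃ w g, Srt w ∧ x = (w.map v).prod * t g}).comap (Tm k t i) := by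
      apply Submodule.span_le.2
      rintro x ⟨w, g, hw, rfl⟩
      have := (lead F w.length).T_mem le_rfl i (mem_FS (k := k) _ hw le_rfl (g := g))
      refine Submodule.span_mono ?_ this
      rintro x ⟨w, g, hw, -, rfl⟩
      exact ⟨w, g, hw, rfl⟩
    exact this hx

end Alg

section HH

variable (k : Type*) [Field k] (n : ℕ) (G : Type*) [Group G] [Fintype G]
  (q : Fin n → Fin n → k) (rho : G → Fin n → Fin n → k)
  (kapC : Fin n → Fin n → G → k) (kapL : Fin n → Fin n → G → Fin n → k)

/-- the quotient map, typed with the frozen instances -/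
def mkH : FreeAlgebra k (Fin n ⊕ G) →ₐ[k] Halg k n G q rho kapC kapL :=
  RingQuot.mkAlgHom k (relH k n G q rho kapC kapL)

/-- generators of `H` -/
def vH (i : Fin n) : Halg k n G q rho kapC kapL := mkH k n G q rho kapC kapL (Xv k n G i)

/-- generators of `H` -/
def tH (g : G) : Halg k n G q rho kapC kapL := mkH k n G q rho kapC kapL (Xg k n G g)

lemma mkH_rel {a b : FreeAlgebra k (Fin n ⊕ G)} (h : relH k n G q rho kapC kapL a b) :
    mkH k n G q rho kapC kapL a = mkH k n G q rho kapC kapL b :=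
  RingQuot.mkAlgHom_rel k h

lemma AlgRel_of_hom {A : Type*} [Ring A] [Algebra k A] (f : FreeAlgebra k (Fin n ⊕ G) →ₐ[k] A)
    (h : ∀ a b, relH k n G q rho kapC kapL a b → f a = f b) :
    AlgRel q rho kapC kapL (fun i => f (Xv k n G i)) (fun g => f (Xg k n G g)) where
  r1 i j := by
    have := h _ _ (Or.inl ⟨i, j, rfl, rfl⟩)
    rw [map_mul] at this
    rw [this]
    simp [kappaElt]
  r2 g g' := by
    have := h _ _ (Or.inr (Or.inl ⟨g, g', rfl, rfl⟩))
    rw [map_mul] at this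
    exact this
  r3 := by
    have := h _ _ (Or.inr (Or.inr (Or.inl ⟨rfl, rfl⟩)))
    rw [map_one] at this
    exact this
  r4 g i := by
    have := h _ _ (Or.inr (Or.inr (Or.inr ⟨g, i, rfl, rfl⟩)))
    rw [map_mul] at this
    rw [this]
    simp

lemma H_rel : AlgRel q rho kapC kapL (vH k n G q rho kapC kapL) (tH k n G q rho kapC kapL) :=
  AlgRel_of_hom k n G q rho kapC kapL (mkH k n G q rho kapC kapL)
    fun _ _ h => mkH_rel k n G q rho kapC kapL h

lemma monoH_eq (p : (Fin n → ℕ) × G) : monoH k n G q rho kapC kapL p =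
    ((wd p.1).map (vH k n G q rho kapC kapL)).prod * tH k n G q rho kapC kapL p.2 := by
  rw [prod_wd]
  rfl

lemma gen_of_hom {A : Type*} [Ring A] [Algebra k A] (f : FreeAlgebra k (Fin n ⊕ G) →ₐ[k] A)
    (hf : Function.Surjective f) (U : Submodule k A) (h1 : (1 : A) ∈ U)
    (hv : ∀ i x, x ∈ U → f (Xv k n G i) * x ∈ U)
    (ht : ∀ g x, x ∈ U → f (Xg k n G g) * x ∈ U) : U = ⊤ := by
  have key : ∀ a x, x ∈ U → f a * x ∈ U := by
    intro a
    induction a using FreeAlgebra.induction with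
    | grade0 r =>
      intro x hx
      rw [AlgHom.commutes, ← Algebra.smul_def]
      exact U.smul_mem _ hx
    | grade1 s =>
      rcases s with i | g
      · exact hv i
      · exact ht g
    | mul a b ha hb =>
      intro x hx
      rw [map_mul, mul_assoc]
      exact ha _ (hb _ hx)
    | add a b ha hb =>
      intro x hx
      rw [map_add, add_mul]
      exact U.add_mem (ha _ hx) (hb _ hx)
  rw [eq_top_iff]
  intro x _
  obtain ⟨a, rfl⟩ := hf x
  simpa using key a 1 h1

lemma H_span : Submodule.span k (Set.range (monoH k n G q rho kapC kapL)) = ⊤ := by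
  have := alg_span (H_rel k n G q rho kapC kapL) (fun U => gen_of_hom k n G
    (mkH k n G q rho kapC kapL)
    (RingQuot.mkAlgHom_surjective k (relH k n G q rho kapC kapL)) U)
  rw [← this]
  congr 1
  ext x
  constructor
  · rintro ⟨p, rfl⟩
    exact ⟨_, _, wd_Srt _, monoH_eq k n G q rho kapC kapL p⟩
  · rintro ⟨w, g, hw, rfl⟩
    refine ⟨(fun i => w.count i, g), ?_⟩
    rw [monoH_eq, wd_of_count hw]

end HH

section Final

variable {k : Type*} [Field k] {n : ℕ} {G : Type*} [Group G] [Fintype G]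
  {q : Fin n → Fin n → k} {rho : G → Fin n → Fin n → k}
  {kapC : Fin n → Fin n → G → k} {kapL : Fin n → Fin n → G → Fin n → k}

lemma PW_top (p : Submodule k (PW k n G)) (h : ∀ d, FS k (bP k n G) d ≤ p) (x : PW k n G) :
    x ∈ p := by
  induction x using Finsupp.induction_linear with
  | zero => exact p.zero_mem
  | add f g hf hg => exact p.add_mem hf hg
  | single a c =>
    obtain ⟨⟨w, hw⟩, g⟩ := a
    have h1 : bP k n G w g ∈ p := h _ (mem_FS _ hw le_rfl)
    have h2 : Finsupp.single (⟨w, hw⟩, g) c = c • bP k n G w g := by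
      simp [bP, hw]
    rw [h2]
    exact p.smul_mem c h1

lemma T_one {M : Type*} [AddCommGroup M] [Module k M] {X : Fin n → M →ₗ[k] M} {T : G → M →ₗ[k] M}
    {b : List (Fin n) → G → M}
    (hrho_one : ∀ i j, rho 1 i j = if i = j then 1 else 0)
    (H : Fam q rho kapC kapL (fun _ => X) (fun _ => T) b) (w : List (Fin n)) (hw : Srt w) (g : G) :
    T 1 (b w g) = b w g := by
  induction w with
  | nil => exact (H.t0 0 1 g).trans (by rw [one_mul])
  | cons j w ih =>
    refine (H.t2 _ 1 j w g hw rfl).trans ?_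
    simp only [hrho_one, ih (Srt_tail hw)]
    simp only [ite_smul, one_smul, zero_smul, Finset.sum_ite_eq', Finset.mem_univ, if_true]
    exact H.h1 0 j w g hw

lemma rep_word {M : Type*} [AddCommGroup M] [Module k M] {X : Fin n → M →ₗ[k] M}
    {T : G → M →ₗ[k] M} {b : List (Fin n) → G → M}
    (H : Fam q rho kapC kapL (fun _ => X) (fun _ => T) b) (w : List (Fin n)) (hw : Srt w) (g : G) :
    ((w.map (fun i => (X i : Module.End k M))).prod * (T g : Module.End k M)) (b [] 1)
      = b w g := by
  induction w with
  | nil => simpa using H.t0 0 g 1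
  | cons j w ih =>
    rw [List.map_cons, List.prod_cons, mul_assoc, Module.End.mul_apply, ih (Srt_tail hw)]
    exact H.h1 0 j w g hw

/-- the representation of the free algebra -/
def repF {M : Type*} [AddCommGroup M] [Module k M] (X : Fin n → M →ₗ[k] M)
    (T : G → M →ₗ[k] M) : FreeAlgebra k (Fin n ⊕ G) →ₐ[k] Module.End k M :=
  FreeAlgebra.lift k (Sum.elim X T)

lemma repF_v {M : Type*} [AddCommGroup M] [Module k M] (X : Fin n → M →ₗ[k] M)
    (T : G → M →ₗ[k] M) (i : Fin n) : repF X T (Xv k n G i) = X i := by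
  simp [repF, Xv]

lemma repF_t {M : Type*} [AddCommGroup M] [Module k M] (X : Fin n → M →ₗ[k] M)
    (T : G → M →ₗ[k] M) (i : G) : repF X T (Xg k n G i) = T i := by
  simp [repF, Xg]

lemma repF_rel {M : Type*} [AddCommGroup M] [Module k M] (X : Fin n → M →ₗ[k] M)
    (T : G → M →ₗ[k] M) (hgood : ∀ x, x ∈ GoodSub q rho kapC kapL X T) (h1 : ∀ x, T 1 x = x) :
    ∀ ⦃a b⦄, relH k n G q rho kapC kapL a b → repF X T a = repF X T b := by
  rintro a b (⟨i, j, rfl, rfl⟩ | ⟨g, h, rfl, rfl⟩ | ⟨rfl, rfl⟩ | ⟨g, i, rfl, rfl⟩)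
  · ext x
    have := (hgood x).1 i j
    simp only [kappaElt, map_add, map_mul, map_sum, map_smul, AlgHom.commutes, repF_v, repF_t]
    simp only [Module.End.mul_apply, LinearMap.add_apply, LinearMap.smul_apply,
      LinearMap.sum_apply, Module.algebraMap_end_apply]
    rw [this, Kop_apply]
  · ext x
    simp only [map_mul, repF_t]
    exact (hgood x).2.2 g h
  · ext x
    simp only [map_one, repF_t]
    exact h1 x
  · ext x
    simp only [map_mul, map_sum, map_smul, repF_v, repF_t]
    simp only [Module.End.mul_apply, LinearMap.smul_apply, LinearMap.sum_apply]
    exact (hgood x).2.1 g i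

lemma H_lift {A : Type*} [Ring A] [Algebra k A] (f : FreeAlgebra k (Fin n ⊕ G) →ₐ[k] A)
    (h : ∀ ⦃a b⦄, relH k n G q rho kapC kapL a b → f a = f b) :
    ∃ F : Halg k n G q rho kapC kapL →ₐ[k] A, ∀ a, F (mkH k n G q rho kapC kapL a) = f a :=
  ⟨RingQuot.liftAlgHom k ⟨f, h⟩, fun a => RingQuot.liftAlgHom_mkAlgHom_apply k f h a⟩

lemma LI_words {A : Type*} [Ring A] [Algebra k A] {v : Fin n → A} {t : G → A}
    (hLI : LinearIndependent k (fun p : (Fin n → ℕ) × G => ((wd p.1).map v).prod * t p.2)) :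
    ∃ Φ : A →ₗ[k] PW k n G, ∀ w g, Srt w → Φ ((w.map v).prod * t g) = bP k n G w g := by
  classical
  let f : {w : List (Fin n) // Srt w} × G → (Fin n → ℕ) × G := fun p => (fun i => p.1.1.count i, p.2)
  have hf : Function.Injective f := by
    rintro ⟨⟨w, hw⟩, g⟩ ⟨⟨w', hw'⟩, g'⟩ h
    have h1 := congrArg Prod.fst h
    have h2 : g = g' := congrArg Prod.snd h
    have h3 : w = w' := by rw [← wd_of_count hw, ← wd_of_count hw']; exact congrArg wd h1
    subst h2 h3
    rfl
  have hLI' := hLI.comp f hf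
  obtain ⟨Φ, hΦ⟩ := LinearMap.exists_leftInverse_of_injective _
    (LinearMap.ker_eq_bot.2 hLI')
  refine ⟨Φ, fun w g hw => ?_⟩
  have := LinearMap.congr_fun hΦ (bP k n G w g)
  rw [LinearMap.comp_apply, lc_bP _ hw g] at this
  simpa [f, wd_of_count hw] using this

lemma fwd_alg [CharZero k] (hq_diag : ∀ i, q i i = 1)
    (hq_inv : ∀ i j, q i j * q j i = 1)
    (hm : ∀ i j (h : G), QC q (mnr q rho i j h))
    (hC : ∀ i j g, kapC i j g = -(q i j) * kapC j i g)
    (hL : ∀ i j g l, kapL i j g l = -(q i j) * kapL j i g l)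
    {A : Type*} [Ring A] [Algebra k A] {v : Fin n → A} {t : G → A}
    (R : AlgRel q rho kapC kapL v t)
    (hLI : LinearIndependent k (fun p : (Fin n → ℕ) × G => ((wd p.1).map v).prod * t p.2)) :
    Cond1 k n G q rho kapC kapL ∧ Cond2 k n G q rho kapL ∧
        Cond3 k n G q rho kapC kapL ∧ Cond4 k n G q rho kapC kapL := by
  obtain ⟨Φ, hΦ⟩ := LI_words hLI
  rw [Cond1_iff hq_diag hq_inv hm hC hL, Cond2_iff hq_diag hq_inv, Cond3_iff hq_inv hC hL,
    Cond4_iff hq_inv hL]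
  refine fwd_conds hq_diag hq_inv hm (alg_good R) 1 Φ ?_ ?_ ?_
  · intro g
    rw [← hΦ _ _ List.Pairwise.nil]
    simp [Tm]
  · intro g l
    rw [← hΦ _ _ (Srt1 l)]
    simp [Tm, Xm]
  · intro g a b hab
    rw [← hΦ _ _ (Srt2 hab)]
    simp [Tm, Xm, mul_assoc]

lemma bP_LI : LinearIndependent k (fun p : (Fin n → ℕ) × G => bP k n G (wd p.1) p.2) := by
  classical
  have h := (Finsupp.basisSingleOne (R := k) (ι := {w : List (Fin n) // Srt w} × G)).linearIndependent
  have hf : Function.Injective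
      (fun p : (Fin n → ℕ) × G => ((⟨wd p.1, wd_Srt p.1⟩ : {w : List (Fin n) // Srt w}), p.2)) := by
    rintro ⟨m, g⟩ ⟨m', g'⟩ h
    have h1 : wd m = wd m' := congrArg (fun x => x.1.1) h
    have h2 : g = g' := congrArg Prod.snd h
    have h3 : m = m' := by
      funext i
      rw [← wd_count m, h1, wd_count]
    rw [h2, h3]
  have := h.comp _ hf
  convert this using 1
  funext p
  simp [bP, wd_Srt]

lemma bwd_alg {A : Type*} [Ring A] [Algebra k A] {v : Fin n → A} {t : G → A}
    {X : Fin n → PW k n G →ₗ[k] PW k n G} {T : G → PW k n G →ₗ[k] PW k n G}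
    (H : Fam q rho kapC kapL (fun _ => X) (fun _ => T) (bP k n G))
    (F : A →ₐ[k] Module.End k (PW k n G)) (hv : ∀ i, F (v i) = X i) (ht : ∀ g, F (t g) = T g) :
    LinearIndependent k (fun p : (Fin n → ℕ) × G => ((wd p.1).map v).prod * t p.2) := by
  let ψ : A →ₗ[k] PW k n G := (LinearMap.applyₗ (bP k n G [] 1)) ∘ₗ F.toLinearMap
  refine LinearIndependent.of_comp ψ ?_
  convert bP_LI (k := k) (n := n) (G := G) using 1
  funext p
  rw [← rep_word H (wd p.1) (wd_Srt p.1) p.2]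
  have : F (((wd p.1).map v).prod * t p.2) =
      ((wd p.1).map (fun i => (X i : Module.End k (PW k n G)))).prod * T p.2 := by
    rw [map_mul, ht, map_list_prod, List.map_map]
    congr 3
    funext i
    exact hv i
  exact congrArg (fun f : Module.End k (PW k n G) => f (bP k n G [] 1)) this

end Final


/-- Theorem 2.1 of the paper, after Shroff.  Under the standing
hypotheses (char 0, `q_{ii} = 1`, `q_{ji} = q_{ij}⁻¹`, `G` acting linearly on `V`
by `ρ` so that the action induces algebra automorphisms of `S_q(V)`, and `κ`
bilinear with `κ(vᵢ,vⱼ) = −q_{ij} κ(vⱼ,vᵢ)`), the algebra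
`H_{q,κ} = (T(V) ⋊ G)/(vᵢvⱼ − q_{ij}vⱼvᵢ − κ(vᵢ,vⱼ))` is a quantum Drinfeld
orbifold algebra (equivalently, `{v₁^{m₁}⋯v_n^{m_n} # g}` is a `k`-basis) if and
only if conditions (1)–(4) hold. -/
theorem quantum_drinfeld_orbifold_algebra_iff_pbw_conditions
    (k : Type*) [Field k] [CharZero k] (n : ℕ) (G : Type*)
    [Group G] [Fintype G]
    (q : Fin n → Fin n → k) (rho : G → Fin n → Fin n → k)
    (kapC : Fin n → Fin n → G → k) (kapL : Fin n → Fin n → G → Fin n → k)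
    (hq_diag : ∀ i, q i i = 1)
    (hq_inv : ∀ i j, q i j * q j i = 1)
    (hrho_one : ∀ i j, rho 1 i j = if i = j then 1 else 0)
    (hrho_mul : ∀ g h i j, rho (g * h) i j = ∑ l, rho g i l * rho h l j)
    (hrho_alg : ∀ g : G, ∃ f : Sq k n q →ₐ[k] Sq k n q,
      ∀ i, f (vS k n q i) = ∑ l, rho g l i • vS k n q l)
    (hkapC_antisym : ∀ i j g, kapC i j g = -(q i j) * kapC j i g)
    (hkapL_antisym : ∀ i j g l, kapL i j g l = -(q i j) * kapL j i g l) :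
    IsQDOA k n G q rho kapC kapL ↔
      Cond1 k n G q rho kapC kapL ∧ Cond2 k n G q rho kapL ∧
        Cond3 k n G q rho kapC kapL ∧ Cond4 k n G q rho kapC kapL := by
  have hm := mnr_QC (G := G) hq_diag hq_inv hrho_alg
  constructor
  · rintro ⟨hLI, -⟩
    have hLI2 : LinearIndependent k (fun p : (Fin n → ℕ) × G =>
        ((wd p.1).map (vH k n G q rho kapC kapL)).prod * tH k n G q rho kapC kapL p.2) := by
      have e : monoH k n G q rho kapC kapL = fun p : (Fin n → ℕ) × G =>
        ((wd p.1).map (vH k n G q rho kapC kapL)).prod * tH k n G q rho kapC kapL p.2 :=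
        funext fun p => monoH_eq k n G q rho kapC kapL p
      rw [e] at hLI
      exact hLI
    exact fwd_alg hq_diag hq_inv hm hkapC_antisym hkapL_antisym
      (H_rel k n G q rho kapC kapL) hLI2
  · rw [Cond1_iff hq_diag hq_inv hm hkapC_antisym hkapL_antisym, Cond2_iff hq_diag hq_inv,
      Cond3_iff hq_inv hkapC_antisym hkapL_antisym, Cond4_iff hq_inv hkapL_antisym]
    rintro ⟨c1, c2, c3, c4⟩
    refine ⟨?_, H_span k n G q rho kapC kapL⟩
    obtain ⟨X, T, H⟩ := exists_ops q rho kapC kapL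
    have hgood : ∀ x, x ∈ GoodSub q rho kapC kapL X T := PW_top _
      (GoodSub_top hq_diag hq_inv hrho_mul hkapC_antisym hkapL_antisym hm c1 c2 c3 c4 H)
    have h1 : ∀ x, T 1 x = x := by
      intro x
      refine PW_top (LinearMap.eqLocus (T 1) LinearMap.id) (fun d => ?_) x
      apply Submodule.span_le.2
      rintro x ⟨w, g, hw, -, rfl⟩
      exact T_one hrho_one H w hw g
    obtain ⟨F, hF⟩ := H_lift (repF X T) (repF_rel X T hgood h1)
    have := bwd_alg (v := vH k n G q rho kapC kapL) (t := tH k n G q rho kapC kapL) H F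
      (fun i => (hF _).trans (repF_v X T i)) (fun g => (hF _).trans (repF_t X T g))
    have e : monoH k n G q rho kapC kapL = fun p : (Fin n → ℕ) × G =>
        ((wd p.1).map (vH k n G q rho kapC kapL)).prod * tH k n G q rho kapC kapL p.2 :=
      funext fun p => monoH_eq k n G q rho kapC kapL p
    rw [e]
    exact this

end QDOA
end
end

section
/- Let k be a field of characteristic 0, V = k³ with basis v_1,v_2,v_3, q_{ij} = −1 for all i ≠ j (and q_{ii} = 1), and G the trivial group. Define κ by κ(v_2,v_1) = v_1, κ(v_3,v_2) = v_3, κ(v_1,v_3) = 0 (extended bilinearly subject to κ(v_i,v_j) = −q_{ij}κ(v_j,v_i)). Then H_{q,κ} = T(V)/(v_2v_1 + v_1v_2 − v_1, v_3v_2 + v_2v_3 − v_3, v_1v_3 + v_3v_1) is a quantum Drinfeld orbifold algebra, i.e., a PBW deformation of S_q(V); in particular {v_1^{m_1}v_2^{m_2}v_3^{m_3} : m_i ≥ 0} is a k-basis of this algebra. -/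
open scoped BigOperators

noncomputable section

/-- The parameters `q_{ij}`: `q_{ii} = 1` and `q_{ij} = -1` for `i ≠ j`. -/
def qEx3 (k : Type*) [Field k] : Fin 3 → Fin 3 → k :=
  fun i j => if i = j then 1 else -1

/-- The parameter function `κ` (with trivial group, valued in `V ⊆ T(V)`):
`κ(v₂,v₁) = v₁`, `κ(v₃,v₂) = v₃`, `κ(v₁,v₃) = 0`, extended subject to
`κ(vᵢ,vⱼ) = -q_{ij} κ(vⱼ,vᵢ)`.  (Indices are shifted down by one:
`v₁ = X 0`, `v₂ = X 1`, `v₃ = X 2`.) -/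
def kappaEx3 (k : Type*) [Field k] : Fin 3 → Fin 3 → FreeAlgebra k (Fin 3) :=
  fun i j =>
    if (i = 1 ∧ j = 0) ∨ (i = 0 ∧ j = 1) then FreeAlgebra.ι k (0 : Fin 3)
    else if (i = 2 ∧ j = 1) ∨ (i = 1 ∧ j = 2) then FreeAlgebra.ι k (2 : Fin 3)
    else 0

/-- The relations defining `H_{q,κ} = T(V)/(vᵢvⱼ - q_{ij} vⱼvᵢ - κ(vᵢ,vⱼ))`,
i.e. `v₂v₁ + v₁v₂ - v₁`, `v₃v₂ + v₂v₃ - v₃`, `v₁v₃ + v₃v₁`. -/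
def relEx3 (k : Type*) [Field k] : FreeAlgebra k (Fin 3) → FreeAlgebra k (Fin 3) → Prop :=
  fun a b => ∃ i j : Fin 3, a = FreeAlgebra.ι k i * FreeAlgebra.ι k j ∧
    b = qEx3 k i j • (FreeAlgebra.ι k j * FreeAlgebra.ι k i) + kappaEx3 k i j

/-- The algebra `H_{q,κ} = T(V)/(v₂v₁ + v₁v₂ − v₁, v₃v₂ + v₂v₃ − v₃, v₁v₃ + v₃v₁)`. -/
def HEx3 (k : Type*) [Field k] := RingQuot (relEx3 k)

instance (k : Type*) [Field k] : Ring (HEx3 k) := by unfold HEx3; infer_instance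
instance (k : Type*) [Field k] : Algebra k (HEx3 k) := by unfold HEx3; infer_instance

/-- The PBW monomial `v₁^{m₁} v₂^{m₂} v₃^{m₃}` in `H_{q,κ}`. -/
def monoEx3 (k : Type*) [Field k] (m : Fin 3 → ℕ) : HEx3 k :=
  ((List.finRange 3).map
    (fun i => (RingQuot.mkAlgHom k (relEx3 k) (FreeAlgebra.ι k i)) ^ (m i))).prod

/-! ### Spanning -/

theorem ex3_span_aux {k A : Type*} [Field k] [Ring A] [Algebra k A] (x y z : A)
    (W : Submodule k A) (hW : ∀ a b c : ℕ, x ^ a * y ^ b * z ^ c ∈ W)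
    (a c : ℕ) (p : Polynomial k) : x ^ a * Polynomial.aeval y p * z ^ c ∈ W := by
  induction p using Polynomial.induction_on' with
  | add p q hp hq =>
    rw [map_add, mul_add, add_mul]
    exact W.add_mem hp hq
  | monomial n r =>
    rw [Polynomial.aeval_monomial, ← Algebra.smul_def, mul_smul_comm, smul_mul_assoc]
    exact W.smul_mem _ (hW a n c)

theorem ex3_comm_aux {k A : Type*} [Field k] [Ring A] [Algebra k A] (x y : A)
    (h : y * x = x * (1 - y)) (a : ℕ) :
    ∃ p : Polynomial k, y * x ^ a = x ^ a * Polynomial.aeval y p := by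
  induction a with
  | zero => exact ⟨Polynomial.X, by simp⟩
  | succ a ih =>
    obtain ⟨p, hp⟩ := ih
    refine ⟨1 - p, ?_⟩
    rw [pow_succ', ← mul_assoc, h, mul_assoc, sub_mul, one_mul, hp, map_sub, map_one]
    noncomm_ring

theorem ex3_mul_mem {k A : Type*} [Field k] [Ring A] [Algebra k A] (x y z : A)
    (h1 : y * x = x * (1 - y)) (h2 : z * y = (1 - y) * z) (h3 : z * x = (-x) * z)
    (W : Submodule k A)
    (hW : W = Submodule.span k (Set.range fun m : Fin 3 → ℕ => x ^ m 0 * y ^ m 1 * z ^ m 2))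
    (w : A) (hw : w ∈ W) : x * w ∈ W ∧ y * w ∈ W ∧ z * w ∈ W := by
  have hm : ∀ a b c : ℕ, x ^ a * y ^ b * z ^ c ∈ W := fun a b c => by
    rw [hW]
    exact Submodule.subset_span ⟨![a, b, c], by simp⟩
  have key : ∀ g : A, (∀ a b c : ℕ, g * (x ^ a * y ^ b * z ^ c) ∈ W) → g * w ∈ W := by
    intro g hg
    have : W ≤ W.comap (LinearMap.mulLeft k g) := by
      conv_lhs => rw [hW]
      rw [Submodule.span_le]
      rintro _ ⟨m, rfl⟩
      exact hg _ _ _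
    exact this hw
  refine ⟨key x ?_, key y ?_, key z ?_⟩ <;> intro a b c
  · have := hm (a + 1) b c
    rwa [pow_succ', mul_assoc, mul_assoc, ← mul_assoc (x ^ a)] at this
  · obtain ⟨p, hp⟩ := ex3_comm_aux (k := k) x y h1 a
    have := ex3_span_aux x y z W hm a c (p * Polynomial.X ^ b)
    rw [map_mul, map_pow, Polynomial.aeval_X, ← mul_assoc, ← hp] at this
    simpa only [mul_assoc] using this
  · have e1 : z * x ^ a = (-x) ^ a * z :=
      (show SemiconjBy z x (-x) from h3).pow_right a
    have e2 : z * y ^ b = (1 - y) ^ b * z :=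
      (show SemiconjBy z y (1 - y) from h2).pow_right b
    have := W.smul_mem ((-1 : k) ^ a)
      (ex3_span_aux x y z W hm a (c + 1) ((1 - Polynomial.X) ^ b))
    have e3 : (-x) ^ a = ((-1 : k) ^ a) • x ^ a := by
      rw [← smul_pow]; simp
    have e : z * (x ^ a * y ^ b * z ^ c) =
        ((-1 : k) ^ a) • (x ^ a * Polynomial.aeval y ((1 - Polynomial.X : Polynomial k) ^ b) *
          z ^ (c + 1)) := by
      calc z * (x ^ a * y ^ b * z ^ c) = (z * x ^ a) * y ^ b * z ^ c := by
            simp only [mul_assoc]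
        _ = (-x) ^ a * (z * y ^ b) * z ^ c := by rw [e1]; simp only [mul_assoc]
        _ = _ := by
          rw [e2, e3, pow_succ']
          simp [mul_assoc]
    rw [e]
    exact this

theorem ex3_rel_gen {k A : Type*} [Field k] [Ring A] [Algebra k A] (g : Fin 3 → A)
    (h01 : g 0 * g 1 + g 1 * g 0 = g 0) (h12 : g 1 * g 2 + g 2 * g 1 = g 2)
    (h02 : g 0 * g 2 + g 2 * g 0 = 0)
    ⦃a b : FreeAlgebra k (Fin 3)⦄ (h : relEx3 k a b) :
    FreeAlgebra.lift k g a = FreeAlgebra.lift k g b := by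
  obtain ⟨i, j, rfl, rfl⟩ := h
  rw [map_mul, map_add, map_smul, map_mul, FreeAlgebra.lift_ι_apply, FreeAlgebra.lift_ι_apply]
  fin_cases i <;> fin_cases j <;> simp [qEx3, kappaEx3]
  · rw [neg_add_eq_sub]; exact eq_sub_of_add_eq h01
  · exact eq_neg_of_add_eq_zero_left h02
  · rw [neg_add_eq_sub]; exact eq_sub_of_add_eq' h01
  · rw [neg_add_eq_sub]; exact eq_sub_of_add_eq h12
  · exact eq_neg_of_add_eq_zero_right h02
  · rw [neg_add_eq_sub]; exact eq_sub_of_add_eq' h12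

theorem ex3_list_prod {A : Type*} [Monoid A] (f : Fin 3 → A) :
    ((List.finRange 3).map f).prod = f 0 * f 1 * f 2 := by
  simp [List.finRange_succ, mul_assoc]

theorem ex3_conv1 {A : Type*} [Ring A] {x y : A} (h : y * x = -(x * y) + x) :
    y * x = x * (1 - y) := by
  rw [h, mul_sub, mul_one]; abel

theorem ex3_conv2 {A : Type*} [Ring A] {y z : A} (h : z * y = -(y * z) + z) :
    z * y = (1 - y) * z := by
  rw [h, sub_mul, one_mul]; abel

theorem ex3_conv3 {A : Type*} [Ring A] {x z : A} (h : z * x = -(x * z)) :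
    z * x = (-x) * z := by
  rw [h, neg_mul]

/-! ### A faithful representation on polynomials -/

section Rep
variable (k : Type*) [Field k]

open MvPolynomial in
def ex3Psi : MvPolynomial (Fin 3) k →ₐ[k] MvPolynomial (Fin 3) k :=
  aeval ![-X 0, X 1, X 2]

open MvPolynomial in
def ex3Phi : MvPolynomial (Fin 3) k →ₐ[k] MvPolynomial (Fin 3) k :=
  aeval ![-X 0, 1 - X 1, X 2]

open MvPolynomial in
theorem ex3_phi_psi (f : MvPolynomial (Fin 3) k) :
    ex3Phi k (ex3Psi k f) = ex3Psi k (ex3Phi k f) := by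
  have : (ex3Phi k).comp (ex3Psi k) = (ex3Psi k).comp (ex3Phi k) := by
    apply MvPolynomial.algHom_ext
    intro i
    fin_cases i <;> simp [ex3Phi, ex3Psi]
  exact DFunLike.congr_fun this f

open MvPolynomial in
def ex3Gen : Fin 3 → Module.End k (MvPolynomial (Fin 3) k) :=
  ![LinearMap.mulLeft k (X 0),
    (2⁻¹ : k) • LinearMap.id +
      LinearMap.mulLeft k (X 1 - C (2⁻¹ : k)) ∘ₗ (ex3Psi k).toLinearMap,
    LinearMap.mulLeft k (X 2) ∘ₗ (ex3Phi k).toLinearMap]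

open MvPolynomial in
theorem ex3Gen_zero (f : MvPolynomial (Fin 3) k) : ex3Gen k 0 f = X 0 * f := rfl

open MvPolynomial in
theorem ex3Gen_one (f : MvPolynomial (Fin 3) k) :
    ex3Gen k 1 f = C (2⁻¹ : k) * f + (X 1 - C (2⁻¹ : k)) * ex3Psi k f := by
  rw [← smul_eq_C_mul]; rfl

open MvPolynomial in
theorem ex3Gen_two (f : MvPolynomial (Fin 3) k) : ex3Gen k 2 f = X 2 * ex3Phi k f := rfl

variable [CharZero k]

open MvPolynomial in
theorem ex3_C_half : (C (2⁻¹ : k) : MvPolynomial (Fin 3) k) + C (2⁻¹ : k) = 1 := by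
  rw [← C_add, ← two_mul, mul_inv_cancel₀ two_ne_zero, C_1]

open MvPolynomial in
theorem ex3_r01 : ex3Gen k 0 * ex3Gen k 1 + ex3Gen k 1 * ex3Gen k 0 = ex3Gen k 0 := by
  refine LinearMap.ext fun f => ?_
  have hp : ex3Psi k (X 0) = -X 0 := by simp [ex3Psi]
  simp only [LinearMap.add_apply, Module.End.mul_apply, ex3Gen_zero, ex3Gen_one, map_mul, hp]
  linear_combination (X 0 * f) * ex3_C_half k

open MvPolynomial in
theorem ex3_r12 : ex3Gen k 1 * ex3Gen k 2 + ex3Gen k 2 * ex3Gen k 1 = ex3Gen k 2 := by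
  refine LinearMap.ext fun f => ?_
  have hp : ex3Psi k (X 2) = X 2 := by simp [ex3Psi]
  have hq : ex3Phi k (X 1) = 1 - X 1 := by simp [ex3Phi]
  have hc : ex3Phi k (C (2⁻¹ : k)) = C (2⁻¹ : k) := (ex3Phi k).commutes _
  simp only [LinearMap.add_apply, Module.End.mul_apply, ex3Gen_two, ex3Gen_one, map_mul, hp,
    map_add, map_sub, hq, hc, ex3_phi_psi]
  linear_combination (X 2 * ex3Phi k f - X 2 * ex3Psi k (ex3Phi k f)) * ex3_C_half k

open MvPolynomial in
theorem ex3_r02 : ex3Gen k 0 * ex3Gen k 2 + ex3Gen k 2 * ex3Gen k 0 = 0 := by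
  refine LinearMap.ext fun f => ?_
  have hp : ex3Phi k (X 0) = -X 0 := by simp [ex3Phi]
  simp only [LinearMap.add_apply, Module.End.mul_apply, ex3Gen_two, ex3Gen_zero, map_mul, hp,
    LinearMap.zero_apply]
  ring

theorem ex3_rel_rep ⦃a b : FreeAlgebra k (Fin 3)⦄ (h : relEx3 k a b) :
    FreeAlgebra.lift k (ex3Gen k) a = FreeAlgebra.lift k (ex3Gen k) b :=
  ex3_rel_gen (ex3Gen k) (ex3_r01 k) (ex3_r12 k) (ex3_r02 k) h

def ex3Rep : RingQuot (relEx3 k) →ₐ[k] Module.End k (MvPolynomial (Fin 3) k) :=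
  RingQuot.liftAlgHom k ⟨FreeAlgebra.lift k (ex3Gen k), ex3_rel_rep k⟩

theorem ex3Rep_gen (i : Fin 3) :
    ex3Rep k (RingQuot.mkAlgHom k (relEx3 k) (FreeAlgebra.ι k i)) = ex3Gen k i := by
  simp [ex3Rep]

open MvPolynomial in
theorem ex3_apply (a b c : ℕ) :
    (ex3Gen k 0 ^ a * ex3Gen k 1 ^ b * ex3Gen k 2 ^ c) 1 =
      (X 0 ^ a * X 1 ^ b * X 2 ^ c : MvPolynomial (Fin 3) k) := by
  have e2 : (ex3Gen k 2 ^ c) 1 = (X 2 ^ c : MvPolynomial (Fin 3) k) := by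
    induction c with
    | zero => simp
    | succ c ih =>
      rw [pow_succ', Module.End.mul_apply, ih, ex3Gen_two]
      simp [ex3Phi, pow_succ']
  have e1 : (ex3Gen k 1 ^ b) (X 2 ^ c) = (X 1 ^ b * X 2 ^ c : MvPolynomial (Fin 3) k) := by
    induction b with
    | zero => simp
    | succ b ih =>
      rw [pow_succ', Module.End.mul_apply, ih, ex3Gen_one]
      have : ex3Psi k (X 1 ^ b * X 2 ^ c) = X 1 ^ b * X 2 ^ c := by simp [ex3Psi]
      rw [this]
      ring
  rw [Module.End.mul_apply, Module.End.mul_apply, e2, e1]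
  induction a with
  | zero => simp
  | succ a ih =>
    rw [pow_succ', Module.End.mul_apply, ih, ex3Gen_zero]
    ring

end Rep

/-- The PBW monomials, written out. -/
theorem ex3_mono (k : Type*) [Field k] (m : Fin 3 → ℕ) :
    (monoEx3 k m : RingQuot (relEx3 k)) =
      (RingQuot.mkAlgHom k (relEx3 k) (FreeAlgebra.ι k 0)) ^ m 0 *
      (RingQuot.mkAlgHom k (relEx3 k) (FreeAlgebra.ι k 1)) ^ m 1 *
      (RingQuot.mkAlgHom k (relEx3 k) (FreeAlgebra.ι k 2)) ^ m 2 := by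
  unfold monoEx3
  exact ex3_list_prod _

open MvPolynomial in
theorem ex3_indep (k : Type*) [Field k] [CharZero k] :
    LinearIndependent k (M := RingQuot (relEx3 k)) (monoEx3 k) := by
  apply LinearIndependent.of_comp
    ((LinearMap.applyₗ (R := k) (M := MvPolynomial (Fin 3) k) (M₂ := MvPolynomial (Fin 3) k)
      (1 : MvPolynomial (Fin 3) k)) ∘ₗ (ex3Rep k).toLinearMap)
  have h := (basisMonomials (Fin 3) k).linearIndependent.comp
    (Finsupp.equivFunOnFinite.symm : (Fin 3 → ℕ) → (Fin 3 →₀ ℕ)) (Equiv.injective _)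
  refine Eq.mp (congrArg (fun v : (Fin 3 → ℕ) → MvPolynomial (Fin 3) k =>
    LinearIndependent k v) (funext fun m => Eq.symm ?_)) h
  have h1 := ex3_apply k (m 0) (m 1) (m 2)
  have h2 : ex3Rep k (monoEx3 k m : RingQuot (relEx3 k)) =
      ex3Gen k 0 ^ m 0 * ex3Gen k 1 ^ m 1 * ex3Gen k 2 ^ m 2 := by
    refine (congrArg (ex3Rep k) (ex3_mono k m)).trans ?_
    rw [map_mul, map_mul, map_pow, map_pow, map_pow, ex3Rep_gen, ex3Rep_gen, ex3Rep_gen]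
  rw [← h2] at h1
  refine Eq.trans h1 ?_
  simp [monomial_eq, Finsupp.prod_fintype, Fin.prod_univ_three]

theorem ex3_span (k : Type*) [Field k] :
    Submodule.span k (M := RingQuot (relEx3 k)) (Set.range (monoEx3 k)) = ⊤ := by
  have hr : ∀ i j : Fin 3,
      RingQuot.mkAlgHom k (relEx3 k) (FreeAlgebra.ι k i) *
        RingQuot.mkAlgHom k (relEx3 k) (FreeAlgebra.ι k j) =
      RingQuot.mkAlgHom k (relEx3 k)
        (qEx3 k i j • (FreeAlgebra.ι k j * FreeAlgebra.ι k i) + kappaEx3 k i j) := by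
    intro i j
    rw [← map_mul]
    exact RingQuot.mkAlgHom_rel k ⟨i, j, rfl, rfl⟩
  have h10 := hr 1 0
  have h21 := hr 2 1
  have h20 := hr 2 0
  simp [qEx3, kappaEx3] at h10 h21 h20
  have hmul := ex3_mul_mem (k := k)
    (RingQuot.mkAlgHom k (relEx3 k) (FreeAlgebra.ι k 0))
    (RingQuot.mkAlgHom k (relEx3 k) (FreeAlgebra.ι k 1))
    (RingQuot.mkAlgHom k (relEx3 k) (FreeAlgebra.ι k 2))
    (ex3_conv1 h10) (ex3_conv2 h21) (ex3_conv3 h20)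
  have hfun : (monoEx3 k : (Fin 3 → ℕ) → RingQuot (relEx3 k)) = fun m =>
      (RingQuot.mkAlgHom k (relEx3 k) (FreeAlgebra.ι k 0)) ^ m 0 *
      (RingQuot.mkAlgHom k (relEx3 k) (FreeAlgebra.ι k 1)) ^ m 1 *
      (RingQuot.mkAlgHom k (relEx3 k) (FreeAlgebra.ι k 2)) ^ m 2 := funext (ex3_mono k)
  rw [hfun]
  generalize hW : Submodule.span k (Set.range fun m : Fin 3 → ℕ =>
      (RingQuot.mkAlgHom k (relEx3 k) (FreeAlgebra.ι k 0)) ^ m 0 *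
      (RingQuot.mkAlgHom k (relEx3 k) (FreeAlgebra.ι k 1)) ^ m 1 *
      (RingQuot.mkAlgHom k (relEx3 k) (FreeAlgebra.ι k 2)) ^ m 2) = W at ⊢
  have hmul := hmul W hW.symm
  have h1 : (1 : RingQuot (relEx3 k)) ∈ W := by
    rw [← hW]
    exact Submodule.subset_span ⟨0, by simp⟩
  have key : ∀ f : FreeAlgebra k (Fin 3), ∀ w ∈ W, RingQuot.mkAlgHom k (relEx3 k) f * w ∈ W := by
    intro f
    induction f using FreeAlgebra.induction with
    | grade0 r =>
      intro w hw
      rw [AlgHom.commutes, ← Algebra.smul_def]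
      exact W.smul_mem _ hw
    | grade1 i =>
      intro w hw
      fin_cases i
      · exact (hmul w hw).1
      · exact (hmul w hw).2.1
      · exact (hmul w hw).2.2
    | mul a b ha hb =>
      intro w hw
      rw [map_mul, mul_assoc]
      exact ha _ (hb _ hw)
    | add a b ha hb =>
      intro w hw
      rw [map_add, add_mul]
      exact W.add_mem (ha _ hw) (hb _ hw)
  rw [eq_top_iff]
  rintro t -
  obtain ⟨f, rfl⟩ := RingQuot.mkAlgHom_surjective k (relEx3 k) t
  simpa using key f 1 h1

/-- With `q_{ij} = -1` for `i ≠ j` and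
`κ(v₂,v₁) = v₁`, `κ(v₃,v₂) = v₃`, `κ(v₁,v₃) = 0`, the algebra
`H_{q,κ} = T(V)/(v₂v₁+v₁v₂−v₁, v₃v₂+v₂v₃−v₃, v₁v₃+v₃v₁)` is a quantum Drinfeld
orbifold algebra, i.e. a PBW deformation of `S_q(V)`: the monomials
`v₁^{m₁} v₂^{m₂} v₃^{m₃}` form a `k`-basis. -/
theorem example_trivial_group_is_quantum_drinfeld_orbifold_algebra
    (k : Type*) [Field k] [CharZero k] :
    LinearIndependent k (monoEx3 k) ∧
      Submodule.span k (Set.range (monoEx3 k)) = ⊤ := by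
  exact ⟨ex3_indep k, ex3_span k⟩
end
end

section
/- Let G = 1 and let H_{q,κ} be a quantum Drinfeld orbifold algebra such that for each triple i,j,l with i ≠ j, if C_l^{i,j} ≠ 0 then q_{im}q_{jm} = q_{lm} for all m, and such that both sides of PBW condition (3) vanish for all triples. Set [v_i,v_j] = κ^L(v_i,v_j) and ω(v_i,v_j) = κ^C(v_i,v_j). Then ω satisfies the ε-compatibility condition: for all i,j,k, q_{ki}·ω(v_i,[v_j,v_k]) + q_{ij}·ω(v_j,[v_k,v_i]) + q_{jk}·ω(v_k,[v_i,v_j]) = 0, where ω is extended bilinearly to V×V. -/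
open scoped BigOperators

noncomputable section

namespace QDOA11

/-- The defining relations of `H_{q,κ}` with trivial group `G = 1`:
`vᵢvⱼ − q_{ij} vⱼvᵢ − κ(vᵢ,vⱼ)` where `κ = κ^C + κ^L`. -/
def relH (k : Type*) [Field k] (n : ℕ) (q : Fin n → Fin n → k)
    (kapC : Fin n → Fin n → k) (kapL : Fin n → Fin n → Fin n → k) :
    FreeAlgebra k (Fin n) → FreeAlgebra k (Fin n) → Prop := fun a b =>
  ∃ i j : Fin n, a = FreeAlgebra.ι k i * FreeAlgebra.ι k j ∧
    b = q i j • (FreeAlgebra.ι k j * FreeAlgebra.ι k i)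
      + (∑ l, kapL i j l • FreeAlgebra.ι k l) + algebraMap k _ (kapC i j)

/-- The algebra `H_{q,κ} = T(V)/(vᵢvⱼ − q_{ij}vⱼvᵢ − κ(vᵢ,vⱼ))` (trivial group). -/
def Halg (k : Type*) [Field k] (n : ℕ) (q : Fin n → Fin n → k)
    (kapC : Fin n → Fin n → k) (kapL : Fin n → Fin n → Fin n → k) :=
  RingQuot (relH k n q kapC kapL)

instance (k : Type*) [Field k] (n : ℕ) (q : Fin n → Fin n → k)
    (kapC : Fin n → Fin n → k) (kapL : Fin n → Fin n → Fin n → k) :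
    Ring (Halg k n q kapC kapL) := by unfold Halg; infer_instance

instance (k : Type*) [Field k] (n : ℕ) (q : Fin n → Fin n → k)
    (kapC : Fin n → Fin n → k) (kapL : Fin n → Fin n → Fin n → k) :
    Algebra k (Halg k n q kapC kapL) := by unfold Halg; infer_instance

/-- The PBW monomial `v₁^{m₁} ⋯ v_n^{m_n}` in `H_{q,κ}`. -/
def monoH (k : Type*) [Field k] (n : ℕ) (q : Fin n → Fin n → k)
    (kapC : Fin n → Fin n → k) (kapL : Fin n → Fin n → Fin n → k)
    (m : Fin n → ℕ) : Halg k n q kapC kapL :=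
  ((List.finRange n).map
    (fun i => (RingQuot.mkAlgHom k (relH k n q kapC kapL) (FreeAlgebra.ι k i)) ^ (m i))).prod

/-- The standard basis vector of `V = Fin n → k`. -/
def ev (k : Type*) [Field k] (n : ℕ) (i : Fin n) : Fin n → k := Pi.single i 1

/-- Bilinear extension of vector-valued structure constants to `V × V`. -/
def bil (k : Type*) [Field k] (n : ℕ) (c : Fin n → Fin n → Fin n → k)
    (x y : Fin n → k) : Fin n → k := fun t => ∑ a, ∑ b, x a * y b * c a b t

/-- Bilinear extension of `ω = κ^C` to `V × V`. -/
def ombil (k : Type*) [Field k] (n : ℕ) (c : Fin n → Fin n → k)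
    (x y : Fin n → k) : k := ∑ a, ∑ b, x a * y b * c a b

theorem comm_aux {k A : Type*} [Field k] [Ring A] [Algebra k A] {n : ℕ}
    (q : Fin n → Fin n → k) (X : Fin n → A) (K : Fin n → Fin n → A)
    (hX : ∀ i j, X i * X j = q i j • (X j * X i) + K i j)
    (a : Fin n) (c : Fin n → k) (s : k) (hs : ∀ l, c l ≠ 0 → s = q a l) :
    X a * (∑ l, c l • X l) = s • ((∑ l, c l • X l) * X a) + ∑ l, c l • K a l := by
  rw [Finset.mul_sum, Finset.sum_mul, Finset.smul_sum, ← Finset.sum_add_distrib]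
  refine Finset.sum_congr rfl fun l _ => ?_
  by_cases h : c l = 0
  · simp [h]
  · rw [hs l h, mul_smul_comm, hX a l, smul_add, smul_mul_assoc, smul_comm]

theorem jacobi_aux {k A : Type*} [Field k] [Ring A] [Algebra k A]
    (x y z Lxy Lyz Lzx Kx Ky Kz : A) (a b c a' b' c' Cxy Cyz Czx : k)
    (ha : a * a' = 1) (hb : b * b' = 1) (hc : c * c' = 1)
    -- a = q_xy, b = q_yz, c = q_zx
    (hxy : x * y = a • (y * x) + (Lxy + algebraMap k A Cxy))
    (hyz : y * z = b • (z * y) + (Lyz + algebraMap k A Cyz))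
    (hzx : z * x = c • (x * z) + (Lzx + algebraMap k A Czx))
    (hKx : x * Lyz = (a * c') • (Lyz * x) + Kx)
    (hKy : y * Lzx = (b * a') • (Lzx * y) + Ky)
    (hKz : z * Lxy = (c * b') • (Lxy * z) + Kz)
    (hr : (Cyz * (1 - a * c')) • x + (Czx * (a * c' - c' * b)) • y
      + (Cxy * (c' * b - 1)) • z = 0) :
    c • Kx + a • Ky + b • Kz = 0 := by
  have eKx : Kx = x * Lyz - (a * c') • (Lyz * x) := by rw [hKx]; abel
  have eKy : Ky = y * Lzx - (b * a') • (Lzx * y) := by rw [hKy]; abel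
  have eKz : Kz = z * Lxy - (c * b') • (Lxy * z) := by rw [hKz]; abel
  have eL1 : Lxy = x * y - a • (y * x) - Cxy • 1 := by
    rw [hxy, Algebra.algebraMap_eq_smul_one]; abel
  have eL2 : Lyz = y * z - b • (z * y) - Cyz • 1 := by
    rw [hyz, Algebra.algebraMap_eq_smul_one]; abel
  have eL3 : Lzx = z * x - c • (x * z) - Czx • 1 := by
    rw [hzx, Algebra.algebraMap_eq_smul_one]; abel
  have h2 : c • Kx + a • Ky + b • Kz = (-c) • ((Cyz * (1 - a * c')) • x
      + (Czx * (a * c' - c' * b)) • y + (Cxy * (c' * b - 1)) • z) := by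
    have ha' : a' = a⁻¹ := eq_inv_of_mul_eq_one_right ha
    have hb' : b' = b⁻¹ := eq_inv_of_mul_eq_one_right hb
    have hc' : c' = c⁻¹ := eq_inv_of_mul_eq_one_right hc
    have ha0 : a ≠ 0 := left_ne_zero_of_mul_eq_one ha
    have hb0 : b ≠ 0 := left_ne_zero_of_mul_eq_one hb
    have hc0 : c ≠ 0 := left_ne_zero_of_mul_eq_one hc
    subst ha' hb' hc'
    rw [eKx, eKy, eKz, eL1, eL2, eL3]
    simp only [mul_sub, sub_mul, smul_sub, mul_smul_comm, smul_mul_assoc, smul_smul, mul_one,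
      one_mul, smul_add, mul_assoc]
    match_scalars <;> field_simp <;> ring
  rw [h2, hr, smul_zero]

theorem monoH_zero (k : Type*) [Field k] (n : ℕ) (q : Fin n → Fin n → k)
    (kapC : Fin n → Fin n → k) (kapL : Fin n → Fin n → Fin n → k) :
    monoH k n q kapC kapL 0 = 1 := by
  unfold monoH
  apply List.prod_eq_one
  intro x hx
  obtain ⟨a, -, rfl⟩ := List.mem_map.1 hx
  exact pow_zero _

theorem prod_single_aux {M : Type*} [Monoid M] {ι : Type*} [DecidableEq ι] (f : ι → M) (t : ι)
    (l : List ι) (hl : l.Nodup) :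
    (l.map fun i => f i ^ ((Pi.single t 1 : ι → ℕ) i)).prod = if t ∈ l then f t else 1 := by
  induction l with
  | nil => simp
  | cons a l ih =>
    rw [List.nodup_cons] at hl
    rw [List.map_cons, List.prod_cons, ih hl.2]
    by_cases h : a = t
    · subst h; simp [hl.1]
    · simp [h, Ne.symm h]

def XH (k : Type*) [Field k] (n : ℕ) (q : Fin n → Fin n → k)
    (kapC : Fin n → Fin n → k) (kapL : Fin n → Fin n → Fin n → k) (i : Fin n) :
    Halg k n q kapC kapL :=
  RingQuot.mkAlgHom k (relH k n q kapC kapL) (FreeAlgebra.ι k i)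

theorem monoH_single (k : Type*) [Field k] (n : ℕ) (q : Fin n → Fin n → k)
    (kapC : Fin n → Fin n → k) (kapL : Fin n → Fin n → Fin n → k) (t : Fin n) :
    monoH k n q kapC kapL (Pi.single t 1) = XH k n q kapC kapL t := by
  have := prod_single_aux (XH k n q kapC kapL) t (List.finRange n) (List.nodup_finRange n)
  rw [if_pos (List.mem_finRange t)] at this
  exact this

theorem XH_rel (k : Type*) [Field k] (n : ℕ) (q : Fin n → Fin n → k)
    (kapC : Fin n → Fin n → k) (kapL : Fin n → Fin n → Fin n → k) (i j : Fin n) :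
    XH k n q kapC kapL i * XH k n q kapC kapL j =
      q i j • (XH k n q kapC kapL j * XH k n q kapC kapL i)
      + ((∑ l, kapL i j l • XH k n q kapC kapL l) + algebraMap k _ (kapC i j)) := by
  have h : RingQuot.mkAlgHom k (relH k n q kapC kapL) _ =
    RingQuot.mkAlgHom k (relH k n q kapC kapL) _ :=
    RingQuot.mkAlgHom_rel k (s := relH k n q kapC kapL) ⟨i, j, rfl, rfl⟩
  rw [map_mul, map_add, map_add, map_smul, map_mul, map_sum, AlgHom.commutes, add_assoc] at h
  simp only [map_smul] at h
  exact h

theorem indep_aux {k A ι : Type*} [Field k] [Ring A] [Algebra k A] [Fintype ι] (v : ι → A)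
    (h : LinearIndependent k v) (g : ι → k) (hg : ∑ o, g o • v o = 0) (o : ι) : g o = 0 :=
  Fintype.linearIndependent_iff.1 h g hg o

theorem scalar_zero (k : Type*) [Field k] (n : ℕ) (q : Fin n → Fin n → k)
    (kapC : Fin n → Fin n → k) (kapL : Fin n → Fin n → Fin n → k)
    (h : LinearIndependent k (monoH k n q kapC kapL)) (c : Fin n → k) (b : k)
    (h0 : (∑ t, c t • XH k n q kapC kapL t) + algebraMap k _ b = 0) : b = 0 := by
  let f : Option (Fin n) → (Fin n → ℕ) := fun o => o.elim 0 (fun t => Pi.single t 1)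
  have hf : Function.Injective f := by
    intro u v huv
    cases u with
    | none =>
      cases v with
      | none => rfl
      | some t => have := congrFun huv t; simp [f] at this
    | some s =>
      cases v with
      | none => have := congrFun huv s; simp [f] at this
      | some t =>
        have := congrFun huv s
        by_contra hne
        have hne' : s ≠ t := fun e => hne (by rw [e])
        simp [f, hne'] at this
  have hg : ∑ o, (fun o : Option (Fin n) => o.elim b c) o • (monoH k n q kapC kapL ∘ f) o = 0 := by
    rw [Fintype.sum_option]
    simp only [Function.comp, f, Option.elim, monoH_zero, monoH_single]
    rw [← Algebra.algebraMap_eq_smul_one, add_comm]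
    exact h0
  have hl : LinearIndependent k (monoH k n q kapC kapL ∘ f) := h.comp f hf
  exact indep_aux _ hl _ hg none

theorem ombil_ev (k : Type*) [Field k] (n : ℕ) (c : Fin n → Fin n → k) (i : Fin n)
    (y : Fin n → k) : ombil k n c (ev k n i) y = ∑ b, y b * c i b := by
  unfold ombil ev
  rw [Finset.sum_eq_single i]
  · simp
  · intro b _ hb; simp [hb]
  · simp

/-- Let `G = 1` and let `H_{q,κ}` be a quantum Drinfeld orbifold
algebra such that the structure-constant condition holds and such that both sides
of PBW condition (3) vanish for all triples.  Set `[vᵢ,vⱼ] = κ^L(vᵢ,vⱼ)` and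
`ω(vᵢ,vⱼ) = κ^C(vᵢ,vⱼ)`.  Then `ω` satisfies the ε-compatibility condition:
`q_{ki} ω(vᵢ,[vⱼ,vₖ]) + q_{ij} ω(vⱼ,[vₖ,vᵢ]) + q_{jk} ω(vₖ,[vᵢ,vⱼ]) = 0`
for all `i, j, k`. -/
theorem omega_compatibility_of_qdoa
    (k : Type*) [Field k] [CharZero k] (n : ℕ)
    (q : Fin n → Fin n → k)
    (kapC : Fin n → Fin n → k) (kapL : Fin n → Fin n → Fin n → k)
    (hq_diag : ∀ i, q i i = 1)
    (hq_inv : ∀ i j, q i j * q j i = 1)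
    (hkapC_antisym : ∀ i j, kapC i j = -(q i j) * kapC j i)
    (hkapL_antisym : ∀ i j, kapL i j = -(q i j) • kapL j i)
    (h_pbw : LinearIndependent k (monoH k n q kapC kapL) ∧
      Submodule.span k (Set.range (monoH k n q kapC kapL)) = ⊤)
    (hC : ∀ i j l, i ≠ j → kapL i j l ≠ 0 → ∀ m, q i m * q j m = q l m)
    (h_lhs3 : ∀ i j m : Fin n, i ≠ j → i ≠ m → j ≠ m →
      (q i j * q i m) • bil k n kapL (kapL j m) (ev k n i)
        - bil k n kapL (ev k n i) (kapL j m)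
        + (q i m * q j m) • bil k n kapL (kapL m i) (ev k n j)
        - (q i j * q i m) • bil k n kapL (ev k n j) (kapL m i)
        + bil k n kapL (kapL i j) (ev k n m)
        - (q i m * q j m) • bil k n kapL (ev k n m) (kapL i j) = 0)
    (h_rhs3 : ∀ i j m : Fin n, i ≠ j → i ≠ m → j ≠ m →
      (kapC j m * (1 - q i j * q i m)) • ev k n i
        + (kapC m i * (q i j * q i m - q i m * q j m)) • ev k n j
        + (kapC i j * (q i m * q j m - 1)) • ev k n m = (0 : Fin n → k)) :
    ∀ i j m : Fin n,
      q m i * ombil k n kapC (ev k n i) (kapL j m)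
        + q i j * ombil k n kapC (ev k n j) (kapL m i)
        + q j m * ombil k n kapC (ev k n m) (kapL i j) = 0 := by
  intro i j m
  have hq0 : ∀ a b, q a b ≠ 0 := fun a b => left_ne_zero_of_mul_eq_one (hq_inv a b)
  have hLd : ∀ a b, kapL a a b = 0 := by
    intro a b
    have := congrFun (hkapL_antisym a a) b
    simp only [hq_diag, Pi.smul_apply, smul_eq_mul] at this
    have h2 : (2 : k) * kapL a a b = 0 := by linear_combination this
    simpa using h2
  have hLs : ∀ a b l, kapL a b l = -(q a b) * kapL b a l := fun a b l => by
    have := congrFun (hkapL_antisym a b) l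
    simpa using this
  simp only [ombil_ev]
  have hsw : ∀ x a b, ∑ l, kapL a b l * kapC x l = -(q a b) * ∑ l, kapL b a l * kapC x l := by
    intro x a b
    rw [Finset.mul_sum]
    exact Finset.sum_congr rfl fun l _ => by rw [hLs a b l, mul_assoc]
  by_cases hij : i = j
  · subst hij
    rw [hsw i m i]
    simp [hLd, hq_diag]
  by_cases him : i = m
  · subst him
    rw [hsw i j i, hsw j i i]
    simp only [hLd, hq_diag]
    simp
  by_cases hjm : j = m
  · subst hjm
    rw [hsw j i j]
    simp [hLd, hq_diag]
  have hqi : ∀ a b, q b a = (q a b)⁻¹ := fun a b => eq_inv_of_mul_eq_one_right (hq_inv a b)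
  -- if `v_l` occurs in `[v_a, v_b]` then `q_{xl} = q_{xa} q_{xb}`
  have hs : ∀ x a b, a ≠ b → ∀ l, kapL a b l ≠ 0 → q x a * q x b = q x l := by
    intro x a b hab l hl
    have := hC a b l hab hl x
    rw [hqi a x, hqi b x, hqi l x, ← this, mul_inv]
  let X := XH k n q kapC kapL
  let K : Fin n → Fin n → Halg k n q kapC kapL := fun a b =>
    (∑ l, kapL a b l • X l) + algebraMap k _ (kapC a b)
  have hX : ∀ a b, X a * X b = q a b • (X b * X a) + K a b := XH_rel k n q kapC kapL
  have hr := h_rhs3 i j m hij him hjm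
  have hr' : (kapC j m * (1 - q i j * q i m)) • X i
        + (kapC m i * (q i j * q i m - q i m * q j m)) • X j
        + (kapC i j * (q i m * q j m - 1)) • X m = 0 := by
    have e1 := congrFun hr i
    have e2 := congrFun hr j
    have e3 := congrFun hr m
    simp [ev, hij, him, hjm, Ne.symm hij, Ne.symm him, Ne.symm hjm, -mul_eq_zero] at e1 e2 e3
    rw [e1, e2, e3]; simp
  have key := jacobi_aux (X i) (X j) (X m) _ _ _ _ _ _ (q i j) (q j m) (q m i)
    (q j i) (q m j) (q i m) _ _ _ (hq_inv _ _) (hq_inv _ _) (hq_inv _ _)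
    (hX i j) (hX j m) (hX m i)
    (comm_aux q X K hX i (kapL j m) _ (hs i j m hjm))
    (comm_aux q X K hX j (kapL m i) _ (hs j m i (Ne.symm him)))
    (comm_aux q X K hX m (kapL i j) _ (hs m i j hij)) hr'
  have split : ∀ a (c : Fin n → k), ∑ l, c l • K a l =
      (∑ t, (∑ l, c l * kapL a l t) • X t) + algebraMap k _ (∑ l, c l * kapC a l) := by
    intro a c
    simp only [K, smul_add, Finset.sum_add_distrib, Finset.smul_sum, Finset.sum_smul, map_sum,
      smul_smul]
    rw [Finset.sum_comm]
    congr 1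
    refine Finset.sum_congr rfl fun l _ => ?_
    rw [map_mul, Algebra.smul_def]
  rw [split, split, split] at key
  refine scalar_zero k n q kapC kapL h_pbw.1 (fun t => q m i * (∑ l, kapL j m l * kapL i l t)
    + q i j * (∑ l, kapL m i l * kapL j l t) + q j m * (∑ l, kapL i j l * kapL m l t)) _ ?_
  rw [← key]
  simp only [add_smul, Finset.sum_add_distrib, mul_smul, ← Finset.smul_sum, map_add, map_mul,
    smul_add, ← Algebra.smul_def]
  simp only [X]
  abel

end QDOA11
end
end
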